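/- Let S₀, S₁ and S₂ be three simply connected compact subsets of the plane ℝ² such that the intersection of any two of them is path connected and the intersection S₀ ∩ S₁ ∩ S₂ is nonempty. Then S₀ ∩ S₁ ∩ S₂ is simply connected. -/

import Mathlib

namespace Tri
section


def Flat {G : Type} [Group G] (h v : ℤ → ℤ → G) (i j : ℤ) : Prop :=
  h i j * v (i + 1) j = v i j * h i (j + 1)

def Pot {G : Type} [Group G] (h v u : ℤ → ℤ → G) (i j : ℤ) : Prop :=
  u i j * h i j = u (i + 1) j ∧ u i j * v i j = u i (j + 1) ∧
  u (i + 1) j * v (i + 1) j = u (i + 1) (j + 1) ∧ u i (j + 1) * h i (j + 1) = u (i + 1) (j + 1)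

def Good (G : Type) [Group G] (X : Set (ℤ × ℤ)) : Prop :=
  ∀ h v : ℤ → ℤ → G, (∀ p ∈ X, Flat h v p.1 p.2) → ∃ u : ℤ → ℤ → G, ∀ p ∈ X, Pot h v u p.1 p.2

theorem int_prim {G : Type} [Group G] (h : ℤ → G) : ∃ a : ℤ → G, a 0 = 1 ∧ ∀ i, a i * h i = a (i + 1) := by
  let f : ℕ → G := fun n => Nat.rec 1 (fun k x => x * h k) n
  let g : ℕ → G := fun n => Nat.rec 1 (fun k x => x * (h (-(k : ℤ) - 1))⁻¹) n
  have hf : ∀ k : ℕ, f (k + 1) = f k * h k := fun k => rfl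
  have hg : ∀ k : ℕ, g (k + 1) = g k * (h (-(k : ℤ) - 1))⁻¹ := fun k => rfl
  have hf0 : f 0 = 1 := rfl
  have hg0 : g 0 = 1 := rfl
  clear_value f g
  refine ⟨fun i => if 0 ≤ i then f i.toNat else g (-i).toNat, by simp [hf0], fun i => ?_⟩
  rcases le_or_gt 0 i with hi | hi
  · obtain ⟨k, rfl⟩ := Int.eq_ofNat_of_zero_le hi
    have : (0 : ℤ) ≤ (k : ℤ) + 1 := by omega
    have h2 : ((k : ℤ) + 1).toNat = k + 1 := by omega
    simp [this, h2, hf]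
  · obtain ⟨k, hk⟩ := Int.eq_ofNat_of_zero_le (show 0 ≤ -i - 1 by omega)
    have hi' : i = -(k : ℤ) - 1 := by omega
    subst hi'
    have h1 : ¬ (0 : ℤ) ≤ -(k : ℤ) - 1 := by omega
    have h2 : (-(-(k : ℤ) - 1)).toNat = k + 1 := by omega
    simp only [h1, if_false, h2, hg]
    rcases Nat.eq_zero_or_pos k with rfl | hk0
    · simp [hf0, hg0]
    · have h3 : ¬ (0 : ℤ) ≤ -(k : ℤ) - 1 + 1 := by omega
      have h4 : (-(-(k : ℤ) - 1 + 1)).toNat = k := by omega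
      simp only [h3, if_false, h4]
      group

theorem good_box (G : Type) [Group G] (N : ℤ) : Good G {p | |p.1| ≤ N ∧ |p.2| ≤ N} := by
  intro h v hfl
  choose c hc0 hc using fun i => int_prim (v i)
  obtain ⟨a, ha0, ha⟩ := int_prim (fun i => h i 0)
  have hu2 : ∀ i j, (a i * c i j) * v i j = a i * c i (j + 1) := by
    intro i j; rw [mul_assoc, hc]
  have hu1 : ∀ i, |i| ≤ N → ∀ j, -N ≤ j → j ≤ N + 1 →
      (a i * c i j) * h i j = a (i + 1) * c (i + 1) j := by
    intro i hi j
    have hN : 0 ≤ N := le_trans (abs_nonneg _) hi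
    induction j using Int.induction_on with
    | zero => intro _ _; simp [hc0, ha]
    | succ j ih =>
      intro h1 h2
      have := ih (by omega) (by omega)
      have hf := hfl (i, (j : ℤ)) ⟨hi, by rw [abs_le]; constructor <;> simp <;> omega⟩
      unfold Flat at hf
      simp only at hf
      rw [← hc, ← hc, ← mul_assoc, ← mul_assoc, ← this]
      simp only [mul_assoc] at *
      rw [hf]
    | pred j ih =>
      intro h1 h2
      have := ih (by omega) (by omega)
      have hf := hfl (i, -(j : ℤ) - 1) ⟨hi, by rw [abs_le]; constructor <;> simp <;> omega⟩
      unfold Flat at hf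
      simp only at hf
      have e : -(j : ℤ) - 1 + 1 = -j := by ring
      rw [e] at hf
      have e1 := hc i (-(j : ℤ) - 1)
      have e2 := hc (i + 1) (-(j : ℤ) - 1)
      rw [e] at e1 e2
      rw [← e1, ← e2] at this
      apply mul_right_cancel (b := v (i + 1) (-(j : ℤ) - 1))
      simp only [mul_assoc] at *
      rw [hf, this]
  refine ⟨fun i j => a i * c i j, fun p hp => ?_⟩
  obtain ⟨h1, h2⟩ := hp
  rw [abs_le] at h2
  exact ⟨hu1 _ h1 _ h2.1 (by omega), hu2 _ _, hu2 _ _, hu1 _ h1 _ (by omega) (by omega)⟩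

def Adj (s t : ℤ × ℤ) : Prop :=
  t = (s.1 + 1, s.2) ∨ t = (s.1 - 1, s.2) ∨ t = (s.1, s.2 + 1) ∨ t = (s.1, s.2 - 1)

theorem good_remove {G : Type} [Group G] {X : Set (ℤ × ℤ)} {s t : ℤ × ℤ}
    (hg : Good G (insert s X)) (hs : s ∉ X) (ht : t ∉ X) (hst : Adj s t) : Good G X := by
  classical
  intro h v hfl
  obtain ⟨i, j⟩ := s
  have key : ∀ h' v' : ℤ → ℤ → G, Flat h' v' i j →
      (∀ p ∈ X, h' p.1 p.2 = h p.1 p.2 ∧ v' p.1 p.2 = v p.1 p.2 ∧ v' (p.1 + 1) p.2 = v (p.1 + 1) p.2 ∧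
        h' p.1 (p.2 + 1) = h p.1 (p.2 + 1)) → ∃ u : ℤ → ℤ → G, ∀ p ∈ X, Pot h v u p.1 p.2 := by
    intro h' v' hf heq
    obtain ⟨u, hu⟩ := hg h' v' (by
      rintro p (rfl | hp)
      · exact hf
      · obtain ⟨e1, e2, e3, e4⟩ := heq p hp
        unfold Flat
        rw [e1, e2, e3, e4]
        exact hfl p hp)
    refine ⟨u, fun p hp => ?_⟩
    obtain ⟨e1, e2, e3, e4⟩ := heq p hp
    have := hu p (Or.inr hp)
    unfold Pot at *
    rwa [e1, e2, e3, e4] at this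
  rcases hst with rfl | rfl | rfl | rfl
  · refine key h (fun a b => if a = i + 1 ∧ b = j then (h i j)⁻¹ * (v i j * h i (j + 1)) else v a b) ?_ ?_
    · simp [Flat]
    · rintro ⟨a, b⟩ hp
      refine ⟨rfl, if_neg ?_, if_neg ?_, rfl⟩
      · rintro ⟨rfl, rfl⟩; exact ht hp
      · rintro ⟨h1, h2⟩
        simp only at h1 h2
        obtain rfl : a = i := by omega
        subst h2; exact hs hp
  · refine key h (fun a b => if a = i ∧ b = j then (h i j * v (i + 1) j) * (h i (j + 1))⁻¹ else v a b) ?_ ?_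
    · simp [Flat]
    · rintro ⟨a, b⟩ hp
      refine ⟨rfl, if_neg ?_, if_neg ?_, rfl⟩
      · rintro ⟨rfl, rfl⟩; exact hs hp
      · rintro ⟨h1, h2⟩
        simp only at h1 h2
        obtain rfl : a = i - 1 := by omega
        subst h2; exact ht hp
  · refine key (fun a b => if a = i ∧ b = j + 1 then (v i j)⁻¹ * (h i j * v (i + 1) j) else h a b) v ?_ ?_
    · simp [Flat]
    · rintro ⟨a, b⟩ hp
      refine ⟨if_neg ?_, rfl, rfl, if_neg ?_⟩
      · rintro ⟨rfl, rfl⟩; exact ht hp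
      · rintro ⟨h1, h2⟩
        simp only at h1 h2
        obtain rfl : b = j := by omega
        subst h1; exact hs hp
  · refine key (fun a b => if a = i ∧ b = j then (v i j * h i (j + 1)) * (v (i + 1) j)⁻¹ else h a b) v ?_ ?_
    · simp [Flat]
    · rintro ⟨a, b⟩ hp
      refine ⟨if_neg ?_, rfl, rfl, if_neg ?_⟩
      · rintro ⟨rfl, rfl⟩; exact hs hp
      · rintro ⟨h1, h2⟩
        simp only at h1 h2
        obtain rfl : b = j - 1 := by omega
        subst h1; exact ht hp

theorem exit_step {X Y : Set (ℤ × ℤ)} {s t : ℤ × ℤ} (hs : s ∈ Y) (ht : t ∉ Y) (hsX : s ∉ X)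
    (h : Relation.ReflTransGen (fun a b => Adj a b ∧ b ∉ X) s t) :
    ∃ a b, a ∈ Y ∧ a ∉ X ∧ b ∉ Y ∧ Adj a b := by
  induction h with
  | refl => exact absurd hs ht
  | @tail b c hb hbc ih =>
    by_cases hbY : b ∈ Y
    · refine ⟨b, c, hbY, ?_, ht, hbc.1⟩
      rcases hb.cases_tail with rfl | ⟨_, _, h2⟩
      · exact hsX
      · exact h2.2
    · exact ih hbY

theorem good_of_reach (G : Type) [Group G] (X : Set (ℤ × ℤ)) (B : Finset (ℤ × ℤ)) (hXB : X ⊆ B)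
    (hB : Good G (B : Set (ℤ × ℤ)))
    (hr : ∀ s ∉ X, ∃ t ∉ B, Relation.ReflTransGen (fun a b => Adj a b ∧ b ∉ X) s t) : Good G X := by
  classical
  have key : ∀ n : ℕ, ∀ C : Finset (ℤ × ℤ), C ⊆ B → X ⊆ C → C.card = n → Good G (C : Set (ℤ × ℤ)) → Good G X := by
    intro n
    induction n with
    | zero =>
      intro C _ hXC hc hgood
      have : C = ∅ := Finset.card_eq_zero.mp hc
      subst this
      have : X = ∅ := by simpa using hXC
      subst this; simpa using hgood
    | succ n ih =>
      intro C hCB hXC hc hgood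
      by_cases he : (C : Set (ℤ × ℤ)) ⊆ X
      · rwa [← Set.Subset.antisymm he hXC]
      · obtain ⟨s, hsC, hsX⟩ := Set.not_subset.mp he
        obtain ⟨t, htB, hst⟩ := hr s hsX
        obtain ⟨a, b, ha, haX, hb, hab⟩ := exit_step hsC (fun h => htB (hCB h)) hsX hst
        refine ih (C.erase a) ((Finset.erase_subset _ _).trans hCB) ?_ ?_ ?_
        · intro x hx
          simp only [Finset.coe_erase, Set.mem_diff, Set.mem_singleton_iff]
          exact ⟨hXC hx, fun h => haX (h ▸ hx)⟩
        · rw [Finset.card_erase_of_mem ha, hc]; rfl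
        · refine good_remove (s := a) (t := b) ?_ (by simp) ?_ hab
          · rwa [← Finset.coe_insert, Finset.insert_erase ha]
          · intro h
            exact hb (Finset.mem_coe.mpr (Finset.mem_of_mem_erase h))
  exact key _ B (Finset.Subset.refl _) hXB rfl hB

end
end Tri

namespace Tri
section
open Metric Set

/-- The point `p` can be joined to arbitrarily far away points in the complement of `K`. -/
def Esc (K : Set ℂ) (p : ℂ) : Prop := ∀ R : ℝ, ∃ q, R < ‖q‖ ∧ JoinedIn Kᶜ p q

/-- `Y` does not separate the plane. -/
def Nonsep (Y : Set ℂ) : Prop := ∀ p ∉ Y, Esc Y p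

/-- Closed grid square. -/
def sq (d : ℝ) (i j : ℤ) : Set ℂ :=
  {z | d * i ≤ z.re ∧ z.re ≤ d * (i + 1) ∧ d * j ≤ z.im ∧ z.im ≤ d * (j + 1)}

/-- index of grid square containing a point -/
noncomputable def fl (d : ℝ) (a : ℂ) : ℤ × ℤ := (⌊a.re / d⌋, ⌊a.im / d⌋)

theorem mem_fl {d : ℝ} (hd : 0 < d) (a : ℂ) : a ∈ sq d (fl d a).1 (fl d a).2 := by
  have h1 := Int.floor_le (a.re / d)
  have h2 := (Int.lt_floor_add_one (a.re / d)).le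
  have h3 := Int.floor_le (a.im / d)
  have h4 := (Int.lt_floor_add_one (a.im / d)).le
  rw [le_div_iff₀ hd] at h1 h3
  rw [div_le_iff₀ hd] at h2 h4
  refine ⟨?_, ?_, ?_, ?_⟩ <;> simp only [fl] <;> linarith

theorem dist_le_re_im (a b : ℂ) : dist a b ≤ |a.re - b.re| + |a.im - b.im| := by
  rw [dist_eq_norm]
  simpa using Complex.norm_le_abs_re_add_abs_im (a - b)

theorem re_le_dist (a b : ℂ) : |a.re - b.re| ≤ dist a b := by
  rw [dist_eq_norm]
  simpa using Complex.abs_re_le_norm (a - b)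

theorem im_le_dist (a b : ℂ) : |a.im - b.im| ≤ dist a b := by
  rw [dist_eq_norm]
  simpa using Complex.abs_im_le_norm (a - b)

theorem int_near_aux {d x y : ℝ} (hd : 0 < d) {i j : ℤ} (h1 : d * i ≤ x) (h2 : y < d * (j + 1))
    (h : x - y < d) : i ≤ j + 1 := by
  have : (i : ℝ) < j + 2 := by
    have : d * i < d * (j + 2) := by linarith
    exact lt_of_mul_lt_mul_left this hd.le
  have : i < j + 2 := by exact_mod_cast this
  omega

theorem fl_lt {d : ℝ} (hd : 0 < d) (a : ℂ) :
    a.re < d * ((fl d a).1 + 1) ∧ a.im < d * ((fl d a).2 + 1) := by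
  have h2 := (Int.lt_floor_add_one (a.re / d))
  have h4 := (Int.lt_floor_add_one (a.im / d))
  rw [div_lt_iff₀ hd] at h2 h4
  constructor <;> simp only [fl] <;> linarith

theorem fl_near {d : ℝ} (hd : 0 < d) {a b : ℂ} (h : dist a b < d) :
    |(fl d a).1 - (fl d b).1| ≤ 1 ∧ |(fl d a).2 - (fl d b).2| ≤ 1 := by
  have h1 := mem_fl hd a
  have h2 := mem_fl hd b
  have h3 := fl_lt hd a
  have h4 := fl_lt hd b
  have h5 := abs_lt.1 ((re_le_dist a b).trans_lt h)
  have h6 := abs_lt.1 ((im_le_dist a b).trans_lt h)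
  have e1 := int_near_aux hd h1.1 h4.1 h5.2
  have e2 := int_near_aux hd h2.1 h3.1 (by linarith)
  have e3 := int_near_aux hd h1.2.2.1 h4.2 h6.2
  have e4 := int_near_aux hd h2.2.2.1 h3.2 (by linarith)
  constructor <;> rw [abs_le] <;> omega

theorem sq_fl_near {d : ℝ} (hd : 0 < d) {p : ℂ} {i j : ℤ} (h : p ∈ sq d i j) :
    |(fl d p).1 - i| ≤ 1 ∧ |(fl d p).2 - j| ≤ 1 := by
  have h1 := mem_fl hd p
  have h3 := fl_lt hd p
  obtain ⟨a1, a2, a3, a4⟩ := h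
  obtain ⟨b1, b2, b3, b4⟩ := h1
  have c1 := int_near_aux hd a1 h3.1 (by linarith)
  have c3 := int_near_aux hd a3 h3.2 (by linarith)
  have aux : ∀ (x : ℝ) (k l : ℤ), d * k ≤ x → x ≤ d * (l + 1) → k ≤ l + 1 := by
    intro x k l h1 h2
    have : (k : ℝ) ≤ l + 1 := le_of_mul_le_mul_left (h1.trans h2) hd
    exact_mod_cast this
  have c2 := aux _ _ _ b1 a2
  have c4 := aux _ _ _ b3 a4
  constructor <;> rw [abs_le] <;> omega

theorem sq_dist {d : ℝ} (hd : 0 < d) {a b : ℂ} {i j k l : ℤ} (ha : a ∈ sq d i j) (hb : b ∈ sq d k l)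
    (h1 : |i - k| ≤ 1) (h2 : |j - l| ≤ 1) : dist a b ≤ 4 * d := by
  obtain ⟨a1, a2, a3, a4⟩ := ha
  obtain ⟨b1, b2, b3, b4⟩ := hb
  rw [abs_le] at h1 h2
  have aux : ∀ k l : ℤ, k ≤ l + 1 → d * k ≤ d * l + d := by
    intro k l h
    have : (k : ℝ) ≤ l + 1 := by exact_mod_cast h
    nlinarith
  have e1 := aux i k (by omega)
  have e2 := aux k i (by omega)
  have e3 := aux j l (by omega)
  have e4 := aux l j (by omega)
  have := dist_le_re_im a b
  have f1 : |a.re - b.re| ≤ 2 * d := by rw [abs_le]; constructor <;> linarith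
  have f2 : |a.im - b.im| ≤ 2 * d := by rw [abs_le]; constructor <;> linarith
  linarith

theorem sq_dist' {d : ℝ} (hd : 0 < d) {a b : ℂ} {i j : ℤ} (ha : a ∈ sq d i j) (hb : b ∈ sq d i j) :
    dist a b ≤ 2 * d := by
  obtain ⟨a1, a2, a3, a4⟩ := ha
  obtain ⟨b1, b2, b3, b4⟩ := hb
  have := dist_le_re_im a b
  have f1 : |a.re - b.re| ≤ d := by rw [abs_le]; constructor <;> linarith
  have f2 : |a.im - b.im| ≤ d := by rw [abs_le]; constructor <;> linarith
  linarith

theorem rtg_near (A : Set (ℤ × ℤ)) (s t : ℤ × ℤ) (h1 : |s.1 - t.1| ≤ 1) (h2 : |s.2 - t.2| ≤ 1)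
    (ht : t ∉ A) (hm : (t.1, s.2) ∉ A) : Relation.ReflTransGen (fun a b => Adj a b ∧ b ∉ A) s t := by
  rw [abs_le] at h1 h2
  have e1 : Relation.ReflTransGen (fun a b => Adj a b ∧ b ∉ A) s (t.1, s.2) := by
    by_cases h : s.1 = t.1
    · rw [← h]
    · refine Relation.ReflTransGen.single ⟨?_, hm⟩
      have : t.1 = s.1 + 1 ∨ t.1 = s.1 - 1 := by omega
      rcases this with h | h <;> simp [Adj, h]
  refine e1.trans ?_
  by_cases h : s.2 = t.2
  · rw [h]
  · refine Relation.ReflTransGen.single ⟨?_, ht⟩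
    have : t.2 = s.2 + 1 ∨ t.2 = s.2 - 1 := by omega
    rcases this with h | h <;> simp [Adj, Prod.ext_iff, h]

theorem esc_uniform {Y : Set ℂ} (hY : IsCompact Y) (hn : Nonsep Y) {C : Set ℂ} (hC : IsCompact C)
    (hCY : Disjoint C Y) (R : ℝ) :
    ∃ ρ > 0, ∀ p ∈ C, ∃ q, R < ‖q‖ ∧ JoinedIn (thickening ρ Y)ᶜ p q := by
  refine hC.induction_on (p := fun s => ∃ ρ > 0, ∀ p ∈ s, ∃ q, R < ‖q‖ ∧ JoinedIn (thickening ρ Y)ᶜ p q)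
    ⟨1, one_pos, by simp⟩ ?_ ?_ ?_
  · rintro s t hst ⟨ρ, h, h'⟩
    exact ⟨ρ, h, fun p hp => h' p (hst hp)⟩
  · rintro s t ⟨ρ, h, h'⟩ ⟨σ, g, g'⟩
    refine ⟨min ρ σ, lt_min h g, ?_⟩
    rintro p (hp | hp)
    · obtain ⟨q, hq, hj⟩ := h' p hp
      exact ⟨q, hq, hj.mono (compl_subset_compl.2 (thickening_mono (min_le_left _ _) _))⟩
    · obtain ⟨q, hq, hj⟩ := g' p hp
      exact ⟨q, hq, hj.mono (compl_subset_compl.2 (thickening_mono (min_le_right _ _) _))⟩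
  · intro p hp
    obtain ⟨q, hq, hj⟩ := hn p (disjoint_left.1 hCY hp) R
    obtain ⟨γ, hγ⟩ := hj
    have hd : Disjoint (range γ) Y := by
      rw [disjoint_left]; rintro _ ⟨t, rfl⟩; exact hγ t
    obtain ⟨δ, hδ, hdd⟩ := hd.exists_thickenings (isCompact_range γ.continuous) hY.isClosed
    have hball : ball p δ ⊆ (thickening δ Y)ᶜ := by
      refine subset_compl_iff_disjoint_right.2 (hdd.mono_left ?_)
      exact ball_subset_thickening (E := range γ) ⟨0, by simp⟩ δ
    refine ⟨ball p δ, mem_nhdsWithin_of_mem_nhds (ball_mem_nhds p hδ), δ, hδ, ?_⟩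
    intro p' hp'
    refine ⟨q, hq, JoinedIn.trans (y := p) ?_ ⟨γ, fun t => ?_⟩⟩
    · exact ((((convex_ball p δ).isPathConnected ⟨p, mem_ball_self hδ⟩)).joinedIn p' hp' p
        (mem_ball_self hδ)).mono hball
    · intro h
      exact disjoint_left.1 hdd (self_subset_thickening hδ _ (mem_range_self t)) h

theorem chain_fl {Y : Set ℂ} {d ρ : ℝ} (hd : 0 < d) (hρ : 4 * d < ρ) {p q : ℂ}
    (h : JoinedIn (thickening ρ Y)ᶜ p q) :
    Relation.ReflTransGen (fun a b => Adj a b ∧ b ∉ {s : ℤ × ℤ | (sq d s.1 s.2 ∩ Y).Nonempty})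
      (fl d p) (fl d q) := by
  obtain ⟨γ, hγ⟩ := h
  have miss : ∀ a ∉ thickening ρ Y, ∀ s : ℤ × ℤ, |s.1 - (fl d a).1| ≤ 1 → |s.2 - (fl d a).2| ≤ 1 →
      s ∉ {s : ℤ × ℤ | (sq d s.1 s.2 ∩ Y).Nonempty} := by
    rintro a ha s h1 h2 ⟨y, hy, hyY⟩
    apply ha
    rw [mem_thickening_iff]
    refine ⟨y, hyY, ?_⟩
    rw [dist_comm]
    exact (sq_dist hd hy (mem_fl hd a) h1 h2).trans_lt hρ
  have step : ∀ a ∉ thickening ρ Y, ∀ b ∉ thickening ρ Y, dist a b < d →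
      Relation.ReflTransGen (fun a b => Adj a b ∧ b ∉ {s : ℤ × ℤ | (sq d s.1 s.2 ∩ Y).Nonempty})
      (fl d a) (fl d b) := by
    intro a ha b hb hab
    obtain ⟨h1, h2⟩ := fl_near hd hab
    refine rtg_near _ _ _ h1 h2 (miss b hb _ (by simp) (by simp)) (miss b hb _ (by simp) ?_)
    simpa using h2
  have := IsPreconnected.induction₂ (s := (univ : Set unitInterval)) isPreconnected_univ
    (fun s t => Relation.ReflTransGen (fun a b => Adj a b ∧ b ∉ {s : ℤ × ℤ | (sq d s.1 s.2 ∩ Y).Nonempty})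
      (fl d (γ s)) (fl d (γ t)) ∧ Relation.ReflTransGen (fun a b => Adj a b ∧ b ∉ {s : ℤ × ℤ | (sq d s.1 s.2 ∩ Y).Nonempty})
      (fl d (γ t)) (fl d (γ s))) ?_ ?_ ?_ (mem_univ 0) (mem_univ 1)
  · simpa using this.1
  · intro x _
    rw [nhdsWithin_univ]
    have : ∀ᶠ y in nhds x, dist (γ x) (γ y) < d := by
      have hc : ContinuousAt (fun y => dist (γ x) (γ y)) x := by fun_prop
      exact hc.eventually_lt continuousAt_const (by simpa using hd)
    filter_upwards [this] with y hy
    exact ⟨step _ (hγ x) _ (hγ y) hy, step _ (hγ y) _ (hγ x) (by rwa [dist_comm])⟩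
  · rintro x y z _ _ _ ⟨h1, h2⟩ ⟨h3, h4⟩
    exact ⟨h1.trans h3, h4.trans h2⟩
  · rintro x y _ _ ⟨h1, h2⟩
    exact ⟨h2, h1⟩

theorem GV {Y : Set ℂ} (hY : IsCompact Y) (hn : Nonsep Y) {η : ℝ} (hη : 0 < η) :
    ∃ d0 > 0, ∀ d, 0 < d → d < d0 → ∀ (G : Type) [Group G] (h v : ℤ → ℤ → G),
      (∀ i j, sq d i j ⊆ thickening η Y → Flat h v i j) →
      ∃ u : ℤ → ℤ → G, ∀ i j, (sq d i j ∩ Y).Nonempty → Pot h v u i j := by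
  obtain ⟨R0, hR0⟩ := hY.isBounded.exists_norm_le
  set R := max R0 0 + 1 with hR
  have hRp : 0 < R := by positivity
  have hYR : ∀ y ∈ Y, ‖y‖ < R := fun y hy => by
    have := hR0 y hy
    have := le_max_left R0 0
    linarith
  have hCc : IsCompact (closedBall (0 : ℂ) (2 * R + 4) \ thickening η Y) :=
    (isCompact_closedBall _ _).diff isOpen_thickening
  obtain ⟨ρ, hρ, hesc⟩ := esc_uniform hY hn hCc
    (disjoint_left.2 fun z hz hz' => hz.2 (self_subset_thickening hη _ hz')) (2 * R + 4)
  refine ⟨min 1 (min (ρ / 8) (η / 4)), by positivity, ?_⟩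
  intro d hd hd0 G _ h v hfl
  obtain ⟨hd1, hd2⟩ := lt_min_iff.1 hd0
  obtain ⟨hd2, hd3⟩ := lt_min_iff.1 hd2
  set N : ℤ := ⌈R / d⌉ with hN
  have hN1 : R ≤ d * N := by
    have := Int.le_ceil (R / d)
    rw [div_le_iff₀ hd] at this
    linarith
  have hN2 : d * N < R + d := by
    have := Int.ceil_lt_add_one (R / d)
    have h2 := mul_lt_mul_of_pos_left this hd
    rw [mul_add, mul_div_cancel₀ _ hd.ne'] at h2
    linarith
  let A : Set (ℤ × ℤ) := {s : ℤ × ℤ | (sq d s.1 s.2 ∩ Y).Nonempty}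
  let B : Finset (ℤ × ℤ) := Finset.Icc (-N) N ×ˢ Finset.Icc (-N) N
  have memB : ∀ s, s ∈ B ↔ |s.1| ≤ N ∧ |s.2| ≤ N := by
    intro s; simp [B, abs_le]
  have hBgood : Good G (B : Set (ℤ × ℤ)) := by
    convert good_box G N using 1
    ext s; simp [memB]
  have cast_le : ∀ k : ℤ, ∀ x : ℝ, d * k ≤ x → x < d * N → k ≤ N := by
    intro k x h1 h2
    have : (k : ℝ) < N := lt_of_mul_lt_mul_left (h1.trans_lt h2) hd.le
    have : k < N := by exact_mod_cast this
    omega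
  have cast_ge : ∀ k : ℤ, ∀ x : ℝ, x ≤ d * (k + 1) → -(d * N) < x → -N ≤ k := by
    intro k x h1 h2
    have : d * (-N : ℝ) < d * (k + 1) := by linarith
    have : (-N : ℝ) < k + 1 := lt_of_mul_lt_mul_left this hd.le
    have : -N < k + 1 := by exact_mod_cast this
    omega
  have hAB : A ⊆ B := by
    rintro s ⟨y, ⟨a1, a2, a3, a4⟩, hy⟩
    have hy' := hYR y hy
    have r1 := abs_lt.1 ((Complex.abs_re_le_norm y).trans_lt hy')
    have r2 := abs_lt.1 ((Complex.abs_im_le_norm y).trans_lt hy')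
    rw [Finset.mem_coe, memB, abs_le, abs_le]
    exact ⟨⟨cast_ge _ _ a2 (by linarith), cast_le _ _ a1 (by linarith)⟩,
      ⟨cast_ge _ _ a4 (by linarith), cast_le _ _ a3 (by linarith)⟩⟩
  let Rel := Relation.ReflTransGen (fun a b : ℤ × ℤ => Adj a b ∧ b ∉ A)
  let X : Set (ℤ × ℤ) := {s | s ∈ A ∨ ¬ ∃ t ∉ B, Rel s t}
  have hXB : X ⊆ B := by
    rintro s (hs | hs)
    · exact hAB hs
    · by_contra hB
      exact hs ⟨s, hB, Relation.ReflTransGen.refl⟩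
  have hreach : ∀ s ∉ X, ∃ t ∉ B, Relation.ReflTransGen (fun a b => Adj a b ∧ b ∉ X) s t := by
    intro s hs
    have hs' : s ∉ A ∧ ∃ t ∉ B, Rel s t := by
      simpa [X] using hs
    obtain ⟨hsA, t, ht, hst⟩ := hs'
    refine ⟨t, ht, ?_⟩
    clear hs hsA
    induction hst using Relation.ReflTransGen.head_induction_on with
    | refl => exact Relation.ReflTransGen.refl
    | head hab hbc ih =>
      refine Relation.ReflTransGen.head ⟨hab.1, ?_⟩ ih
      rintro (h' | h')
      · exact hab.2 h'
      · exact h' ⟨t, ht, hbc⟩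
  have hflat : ∀ p ∈ X, Flat h v p.1 p.2 := by
    rintro s hs
    apply hfl
    intro p hp
    by_contra hpη
    rcases hs with ⟨y, hy, hyY⟩ | hs
    · exact hpη (mem_thickening_iff.2 ⟨y, hyY, (sq_dist' hd hp hy).trans_lt (by linarith)⟩)
    · have hsA : s ∉ A := by
        rintro ⟨y, hy, hyY⟩
        exact hpη (mem_thickening_iff.2 ⟨y, hyY, (sq_dist' hd hp hy).trans_lt (by linarith)⟩)
      have hsB : s ∈ B := hXB (Or.inr hs)
      rw [memB, abs_le, abs_le] at hsB
      obtain ⟨⟨b1, b2⟩, b3, b4⟩ := hsB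
      obtain ⟨a1, a2, a3, a4⟩ := hp
      have bd : ∀ k : ℤ, ∀ x : ℝ, -N ≤ k → k ≤ N → d * k ≤ x → x ≤ d * (k + 1) → |x| ≤ R + 2 := by
        intro k x h1 h2 h3 h4
        have h1' : (-N : ℝ) ≤ k := by exact_mod_cast h1
        have h2' : (k : ℝ) ≤ N := by exact_mod_cast h2
        rw [abs_le]; constructor <;> nlinarith
      have hpn : ‖p‖ ≤ 2 * R + 4 := by
        have := Complex.norm_le_abs_re_add_abs_im p
        have := bd _ _ b1 b2 a1 a2
        have := bd _ _ b3 b4 a3 a4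
        linarith
      obtain ⟨q, hq, hj⟩ := hesc p ⟨by simpa using hpn, hpη⟩
      apply hs
      refine ⟨fl d q, ?_, ?_⟩
      · intro hqB
        rw [memB, abs_le, abs_le] at hqB
        obtain ⟨⟨b1, b2⟩, b3, b4⟩ := hqB
        obtain ⟨a1, a2, a3, a4⟩ := mem_fl hd q
        have := Complex.norm_le_abs_re_add_abs_im q
        have := bd _ _ b1 b2 a1 a2
        have := bd _ _ b3 b4 a3 a4
        linarith
      · have h1 := chain_fl (Y := Y) hd (ρ := ρ) (by linarith) hj
        obtain ⟨n1, n2⟩ := sq_fl_near hd (⟨a1, a2, a3, a4⟩ : p ∈ sq d s.1 s.2)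
        refine Relation.ReflTransGen.trans ?_ h1
        have miss : ∀ t : ℤ × ℤ, |t.1 - (fl d p).1| ≤ 1 → |t.2 - (fl d p).2| ≤ 1 → t ∉ A := by
          rintro t h1 h2 ⟨y, hy, hyY⟩
          refine hpη (mem_thickening_iff.2 ⟨y, hyY, ?_⟩)
          rw [dist_comm]
          exact (sq_dist hd hy (mem_fl hd p) h1 h2).trans_lt (by linarith)
        rw [abs_sub_comm] at n1 n2
        exact rtg_near _ _ _ n1 n2 (miss _ (by simp) (by simp)) (miss _ (by simp) n2)
  obtain ⟨u, hu⟩ := good_of_reach G X B hXB hBgood hreach h v hflat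
  exact ⟨u, fun i j hij => hu (i, j) (Or.inl hij)⟩

end
end Tri

namespace Tri
section
open Metric Set

theorem GVZ {Y : Set ℂ} (hY : IsCompact Y) (hn : Nonsep Y) {η : ℝ} (hη : 0 < η) :
    ∃ d0 > 0, ∀ d, 0 < d → d < d0 → ∀ (h v : ℤ → ℤ → ℤ),
      (∀ i j, sq d i j ⊆ thickening η Y → h i j + v (i + 1) j = v i j + h i (j + 1)) →
      ∃ u : ℤ → ℤ → ℤ, ∀ i j, (sq d i j ∩ Y).Nonempty →
        u i j + h i j = u (i + 1) j ∧ u i j + v i j = u i (j + 1) ∧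
        u (i + 1) j + v (i + 1) j = u (i + 1) (j + 1) ∧ u i (j + 1) + h i (j + 1) = u (i + 1) (j + 1) := by
  obtain ⟨d0, hd0, H⟩ := GV hY hn hη
  refine ⟨d0, hd0, fun d hd hdd h v hf => ?_⟩
  exact H d hd hdd (Multiplicative ℤ) h v hf

theorem chain_const {d : ℝ} (hd : 0 < d) {W : Set ℂ} (hW : IsPreconnected W) (F : ℤ → ℤ → ℤ)
    (hF : ∀ i j, (sq d i j ∩ W).Nonempty → F i j = F (i + 1) j ∧ F i j = F i (j + 1) ∧
      F i j = F (i + 1) (j + 1)) {x y : ℂ} (hx : x ∈ W) (hy : y ∈ W) :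
    F (fl d x).1 (fl d x).2 = F (fl d y).1 (fl d y).2 := by
  refine IsPreconnected.induction₂ hW
    (fun x y => F (fl d x).1 (fl d x).2 = F (fl d y).1 (fl d y).2) ?_ ?_ ?_ hx hy
  · intro a ha
    have : ∀ᶠ b in nhdsWithin a W, dist a b < d := by
      refine mem_nhdsWithin_of_mem_nhds ?_
      have : ball a d ∈ nhds a := ball_mem_nhds a hd
      filter_upwards [this] with b hb
      rwa [mem_ball, dist_comm] at hb
    filter_upwards [this, self_mem_nhdsWithin] with b hb hbW
    obtain ⟨h1, h2⟩ := fl_near hd hb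
    have ea := hF _ _ ⟨a, mem_fl hd a, ha⟩
    have eb := hF _ _ ⟨b, mem_fl hd b, hbW⟩
    generalize fl d a = s at *
    generalize fl d b = t at *
    obtain ⟨i, j⟩ := s
    obtain ⟨k, l⟩ := t
    simp only at *
    rw [abs_le] at h1 h2
    have : k = i ∨ k = i + 1 ∨ i = k + 1 := by omega
    have : l = j ∨ l = j + 1 ∨ j = l + 1 := by omega
    rcases ‹k = i ∨ k = i + 1 ∨ i = k + 1› with rfl | rfl | rfl <;>
    rcases ‹l = j ∨ l = j + 1 ∨ j = l + 1› with rfl | rfl | rfl <;> omega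
  · intro a b c _ _ _ h1 h2
    exact h1.trans h2
  · intro a b _ _ h
    exact h.symm

theorem NI {A B : Set ℂ} (hA : IsCompact A) (hB : IsCompact B) {ε : ℝ} (hε : 0 < ε) :
    ∃ η > 0, thickening η A ∩ thickening η B ⊆ thickening ε (A ∩ B) := by
  have hA' : IsCompact (A \ thickening (ε / 2) (A ∩ B)) := hA.diff isOpen_thickening
  have hdis : Disjoint (A \ thickening (ε / 2) (A ∩ B)) B := by
    rw [disjoint_left]
    rintro z ⟨h1, h2⟩ h3
    exact h2 (self_subset_thickening (by positivity) _ ⟨h1, h3⟩)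
  obtain ⟨δ, hδ, hdd⟩ := hdis.exists_thickenings hA' hB.isClosed
  refine ⟨min δ (ε / 2), by positivity, ?_⟩
  rintro z ⟨hzA, hzB⟩
  obtain ⟨a, ha, hza⟩ := mem_thickening_iff.1 hzA
  obtain ⟨h1, h2⟩ := lt_min_iff.1 hza
  by_cases h : a ∈ thickening (ε / 2) (A ∩ B)
  · obtain ⟨b, hb, hab⟩ := mem_thickening_iff.1 h
    exact mem_thickening_iff.2 ⟨b, hb, by linarith [dist_triangle z a b]⟩
  · exact absurd (thickening_mono (min_le_left _ _) _ hzB)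
      (disjoint_left.1 hdd (mem_thickening_iff.2 ⟨a, ⟨ha, h⟩, h1⟩))

theorem separate {T : Set ℂ} (hT : IsCompact T) {x y : ℂ} (hx : x ∈ T) (hy : y ∈ T)
    (h : y ∉ connectedComponentIn T x) :
    ∃ T0 T1 : Set ℂ, IsCompact T0 ∧ IsCompact T1 ∧ x ∈ T0 ∧ y ∈ T1 ∧ Disjoint T0 T1 ∧ T0 ∪ T1 = T := by
  have : CompactSpace T := isCompact_iff_compactSpace.1 hT
  rw [connectedComponentIn_eq_image hx] at h
  have h2 : (⟨y, hy⟩ : T) ∉ connectedComponent (⟨x, hx⟩ : T) := fun h' => h ⟨_, h', rfl⟩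
  rw [connectedComponent_eq_iInter_isClopen] at h2
  simp only [mem_iInter, not_forall] at h2
  obtain ⟨⟨U, hU, hxU⟩, hyU⟩ := h2
  refine ⟨Subtype.val '' U, Subtype.val '' Uᶜ, ?_, ?_, ⟨_, hxU, rfl⟩, ⟨_, hyU, rfl⟩, ?_, ?_⟩
  · exact hU.1.isCompact.image continuous_subtype_val
  · exact hU.compl.1.isCompact.image continuous_subtype_val
  · exact (disjoint_image_iff Subtype.val_injective).2 disjoint_compl_right
  · rw [← image_union, union_compl_self, image_univ, Subtype.range_coe]

/-- grid vertex -/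
def gv (d : ℝ) (i j : ℤ) : ℂ := ⟨d * i, d * j⟩

theorem gv_mem {d : ℝ} (hd : 0 < d) (i j : ℤ) : gv d i j ∈ sq d i j ∧ gv d (i + 1) j ∈ sq d i j ∧
    gv d i (j + 1) ∈ sq d i j ∧ gv d (i + 1) (j + 1) ∈ sq d i j := by
  simp only [gv, sq, mem_ofPred_eq, Int.cast_add, Int.cast_one]
  refine ⟨⟨?_, ?_, ?_, ?_⟩, ⟨?_, ?_, ?_, ?_⟩, ⟨?_, ?_, ?_, ?_⟩, ⟨?_, ?_, ?_, ?_⟩⟩ <;> nlinarith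

theorem sq_sub {d η : ℝ} (hd : 0 < d) (h : 2 * d < η) {Y : Set ℂ} {i j : ℤ} (hm : (sq d i j ∩ Y).Nonempty) :
    sq d i j ⊆ thickening η Y := by
  intro z hz
  obtain ⟨y, hy, hyY⟩ := hm
  exact mem_thickening_iff.2 ⟨y, hyY, (sq_dist' hd hz hy).trans_lt h⟩

theorem thick_of_near {Y : Set ℂ} {a b : ℂ} {s t r : ℝ} (ha : a ∈ thickening s Y) (hab : dist b a ≤ t)
    (h : s + t ≤ r) : b ∈ thickening r Y := by
  obtain ⟨y, hy, h1⟩ := mem_thickening_iff.1 ha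
  exact mem_thickening_iff.2 ⟨y, hy, by linarith [dist_triangle b a y]⟩

theorem helly {Z0 Z1 Z2 : Set ℂ} (c0 : IsCompact Z0) (c1 : IsCompact Z1) (c2 : IsCompact Z2)
    (n0 : Nonsep Z0) (n1 : Nonsep Z1) (n2 : Nonsep Z2) {x y : ℂ}
    {W01 W02 W12 : Set ℂ} (p01 : IsPreconnected W01) (p02 : IsPreconnected W02) (p12 : IsPreconnected W12)
    (s01 : W01 ⊆ Z0 ∩ Z1) (s02 : W02 ⊆ Z0 ∩ Z2) (s12 : W12 ⊆ Z1 ∩ Z2)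
    (x01 : x ∈ W01) (x02 : x ∈ W02) (x12 : x ∈ W12) (y01 : y ∈ W01) (y02 : y ∈ W02) (y12 : y ∈ W12) :
    y ∈ connectedComponentIn (Z0 ∩ Z1 ∩ Z2) x := by
  classical
  by_contra hcon
  have hT : IsCompact (Z0 ∩ Z1 ∩ Z2) := (c0.inter c1).inter c2
  obtain ⟨T0, T1, cT0, cT1, hx0, hy1, hdis, hun⟩ := separate hT (x := x) (y := y)
    ⟨s01 x01, (s02 x02).2⟩ ⟨s01 y01, (s02 y02).2⟩ hcon
  obtain ⟨δ, hδ, hdd⟩ := hdis.exists_thickenings cT0 cT1.isClosed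
  set κ := δ / 2 with hκ
  have hκ0 : 0 < κ := by positivity
  have cM : IsCompact (Z0 ∩ Z2) := c0.inter c2
  have cN : IsCompact (Z1 ∩ Z2) := c1.inter c2
  have hMN : (Z0 ∩ Z2) ∩ (Z1 ∩ Z2) = T0 ∪ T1 := by rw [hun]; ext; simp; tauto
  obtain ⟨η1, hη1, hNI1⟩ := NI cM cN hκ0
  rw [hMN, thickening_union] at hNI1
  obtain ⟨a2, ha2, hNI2⟩ := NI c0 c2 (ε := η1 / 2) (by positivity)
  obtain ⟨b2, hb2, hNI3⟩ := NI c1 c2 hη1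
  set η2 := min a2 b2 with hη2d
  have hη2 : 0 < η2 := lt_min ha2 hb2
  obtain ⟨d0, hd0, G0⟩ := GVZ c0 n0 hη2
  obtain ⟨d1, hd1, G1⟩ := GVZ c1 n1 hη2
  obtain ⟨d2, hd2, G2⟩ := GVZ c2 n2 hη2
  obtain ⟨d, hd, hdm⟩ := exists_between (show 0 < min (min d0 d1) (min d2 (min (κ / 4) (η1 / 8))) by positivity)
  obtain ⟨h', hdm⟩ := lt_min_iff.1 hdm
  obtain ⟨hdd0, hdd1⟩ := lt_min_iff.1 h'
  obtain ⟨hdd2, hdm⟩ := lt_min_iff.1 hdm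
  obtain ⟨hdκ, hdη⟩ := lt_min_iff.1 hdm
  let a : ℤ → ℤ → Prop := fun i j => gv d i j ∈ thickening (η1 / 2) (Z0 ∩ Z2)
  let u : ℤ → ℤ → ℤ := fun i j => if gv d i j ∈ thickening κ T1 then 1 else 0
  let φh : ℤ → ℤ → ℤ := fun i j => if a i j then u (i + 1) j - u i j else 0
  let φv : ℤ → ℤ → ℤ := fun i j => if a i j then u i (j + 1) - u i j else 0
  have cl1 : ∀ i j, sq d i j ⊆ thickening (η1 / 2) (Z0 ∩ Z2) → φh i j = u (i + 1) j - u i j ∧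
      φv i j = u i (j + 1) - u i j ∧ φv (i + 1) j = u (i + 1) (j + 1) - u (i + 1) j ∧
      φh i (j + 1) = u (i + 1) (j + 1) - u i (j + 1) := by
    intro i j hs
    obtain ⟨g1, g2, g3, g4⟩ := gv_mem hd i j
    have h1 : a i j := hs g1
    have h2 : a (i + 1) j := hs g2
    have h3 : a i (j + 1) := hs g3
    simp only [φh, φv, h1, h2, h3, if_true]
    simp
  have ueq : ∀ i j k l, gv d i j ∈ thickening (η1 / 2) (Z0 ∩ Z2) → gv d i j ∈ thickening η1 (Z1 ∩ Z2) →
      gv d k l ∈ thickening η1 (Z1 ∩ Z2) → dist (gv d k l) (gv d i j) ≤ 2 * d → u k l = u i j := by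
    intro i j k l h1 h2 h3 h4
    have e1 := hNI1 ⟨thickening_mono (by linarith) _ h1, h2⟩
    have e2 := hNI1 ⟨thick_of_near h1 h4 (by linarith), h3⟩
    have h4' : dist (gv d i j) (gv d k l) ≤ 2 * d := by rwa [dist_comm]
    by_cases k1 : gv d i j ∈ thickening κ T1 <;> by_cases k2 : gv d k l ∈ thickening κ T1
    · simp [u, k1, k2]
    · have k3 := e2.resolve_right k2
      exact absurd (thickening_mono (by linarith) _ k1) (disjoint_left.1 hdd (thick_of_near k3 h4' (by linarith)))
    · have k3 := e1.resolve_right k1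
      exact absurd (thickening_mono (by linarith) _ k2) (disjoint_left.1 hdd (thick_of_near k3 h4 (by linarith)))
    · simp [u, k1, k2]
  have cl2 : ∀ i j, sq d i j ⊆ thickening η1 (Z1 ∩ Z2) → φh i j = 0 ∧
      φv i j = 0 ∧ φv (i + 1) j = 0 ∧ φh i (j + 1) = 0 := by
    intro i j hs
    obtain ⟨g1, g2, g3, g4⟩ := gv_mem hd i j
    refine ⟨?_, ?_, ?_, ?_⟩ <;> simp only [φh, φv] <;> split_ifs with h
    any_goals rfl
    all_goals rw [sub_eq_zero]
    · exact ueq _ _ _ _ h (hs g1) (hs g2) (sq_dist' hd g2 g1)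
    · exact ueq _ _ _ _ h (hs g1) (hs g3) (sq_dist' hd g3 g1)
    · exact ueq _ _ _ _ h (hs g2) (hs g4) (sq_dist' hd g4 g2)
    · exact ueq _ _ _ _ h (hs g3) (hs g4) (sq_dist' hd g4 g3)
  let n : ℤ → ℤ → ℤ := fun i j => φh i j + φv (i + 1) j - φv i j - φh i (j + 1)
  let nB : ℤ → ℤ → ℤ := fun i j => if sq d i j ⊆ thickening η2 Z2 then n i j else 0
  have prim : ∀ f : ℤ → ℤ, ∃ b : ℤ → ℤ, ∀ i, b i + f i = b (i + 1) := by
    intro f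
    obtain ⟨b, _, hb⟩ := int_prim (G := Multiplicative ℤ) f
    exact ⟨b, hb⟩
  choose hB hhB using fun i => prim (fun j => - nB i j)
  have nB0 : ∀ i j, sq d i j ⊆ thickening η2 Z0 → nB i j = 0 := by
    intro i j h0
    simp only [nB]
    split_ifs with h
    · have := cl1 i j (fun z hz => hNI2 ⟨thickening_mono (min_le_left _ _) _ (h0 hz),
        thickening_mono (min_le_left _ _) _ (h hz)⟩)
      simp only [n]; omega
    · rfl
  have nB1 : ∀ i j, sq d i j ⊆ thickening η2 Z1 → nB i j = 0 := by
    intro i j h0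
    simp only [nB]
    split_ifs with h
    · have := cl2 i j (fun z hz => hNI3 ⟨thickening_mono (min_le_right _ _) _ (h0 hz),
        thickening_mono (min_le_right _ _) _ (h hz)⟩)
      simp only [n]; omega
    · rfl
  obtain ⟨v0, hv0⟩ := G0 d hd hdd0 hB (fun _ _ => 0) (by
    intro i j hs
    have := nB0 i j hs
    have := hhB i j
    omega)
  obtain ⟨v1, hv1⟩ := G1 d hd hdd1 hB (fun _ _ => 0) (by
    intro i j hs
    have := nB1 i j hs
    have := hhB i j
    omega)
  obtain ⟨v2, hv2⟩ := G2 d hd hdd2 (fun i j => φh i j - hB i j) φv (by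
    intro i j hs
    have h1 : nB i j = n i j := by simp [nB, hs]
    have := hhB i j
    simp only [n] at h1
    try simp only
    omega)
  have k02 := chain_const hd p02 (fun i j => u i j - v2 i j - v0 i j) (by
    intro i j hm
    have m0 := hv0 i j (hm.mono (inter_subset_inter_right _ fun z hz => (s02 hz).1))
    have m2 := hv2 i j (hm.mono (inter_subset_inter_right _ fun z hz => (s02 hz).2))
    have := cl1 i j (sq_sub hd (by linarith) (hm.mono (inter_subset_inter_right _ s02)))
    try simp only at *
    omega) x02 y02
  have k12 := chain_const hd p12 (fun i j => v2 i j + v1 i j) (by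
    intro i j hm
    have m0 := hv1 i j (hm.mono (inter_subset_inter_right _ fun z hz => (s12 hz).1))
    have m2 := hv2 i j (hm.mono (inter_subset_inter_right _ fun z hz => (s12 hz).2))
    have := cl2 i j (sq_sub hd (by linarith) (hm.mono (inter_subset_inter_right _ s12)))
    try simp only at *
    omega) x12 y12
  have k01 := chain_const hd p01 (fun i j => v0 i j - v1 i j) (by
    intro i j hm
    have m0 := hv0 i j (hm.mono (inter_subset_inter_right _ fun z hz => (s01 hz).1))
    have m2 := hv1 i j (hm.mono (inter_subset_inter_right _ fun z hz => (s01 hz).2))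
    try simp only at *
    omega) x01 y01
  have ux : u (fl d x).1 (fl d x).2 = 0 := by
    have : gv d (fl d x).1 (fl d x).2 ∈ thickening δ T0 :=
      mem_thickening_iff.2 ⟨x, hx0, (sq_dist' hd (gv_mem hd _ _).1 (mem_fl hd x)).trans_lt (by linarith)⟩
    have h2 : gv d (fl d x).1 (fl d x).2 ∉ thickening κ T1 := fun h =>
      disjoint_left.1 hdd this (thickening_mono (by linarith) _ h)
    simp [u, h2]
  have uy : u (fl d y).1 (fl d y).2 = 1 := by
    have : gv d (fl d y).1 (fl d y).2 ∈ thickening κ T1 :=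
      mem_thickening_iff.2 ⟨y, hy1, (sq_dist' hd (gv_mem hd _ _).1 (mem_fl hd y)).trans_lt (by linarith)⟩
    simp [u, this]
  try simp only at k01 k02 k12
  omega

end
end Tri

namespace Tri
section
open Metric Set

def hat (K : Set ℂ) : Set ℂ := {p | ¬ Esc K p}

theorem joinedIn_param {S : Set ℂ} {f : ℝ → ℂ} (hf : Continuous f) {A : Set ℝ} (hA : Convex ℝ A)
    (h : ∀ t ∈ A, f t ∈ S) {s t : ℝ} (hs : s ∈ A) (ht : t ∈ A) : JoinedIn S (f s) (f t) := by
  have h1 : IsPathConnected A := hA.isPathConnected ⟨s, hs⟩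
  have h2 := h1.image hf
  exact (h2.joinedIn _ ⟨s, hs, rfl⟩ _ ⟨t, ht, rfl⟩).mono (by rintro _ ⟨r, hr, rfl⟩; exact h r hr)

theorem joinedIn_segment {S : Set ℂ} {p q : ℂ} (h : segment ℝ p q ⊆ S) : JoinedIn S p q :=
  (((convex_segment p q).isPathConnected ⟨p, left_mem_segment ℝ p q⟩).joinedIn p (left_mem_segment ℝ p q) q
    (right_mem_segment ℝ p q)).mono h

theorem subset_hat (K : Set ℂ) : K ⊆ hat K := by
  intro p hp h
  obtain ⟨q, _, hq⟩ := h 0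
  exact hq.source_mem hp

theorem Esc.of_joined {K : Set ℂ} {p q : ℂ} (h : Esc K q) (hj : JoinedIn Kᶜ p q) : Esc K p := by
  intro R
  obtain ⟨r, hr, hqr⟩ := h R
  exact ⟨r, hr, hj.trans hqr⟩

theorem hat_of_joined {K : Set ℂ} {p q : ℂ} (h : p ∈ hat K) (hj : JoinedIn Kᶜ p q) : q ∈ hat K :=
  fun hq => h (hq.of_joined hj)

theorem hat_closed {K : Set ℂ} (hK : IsClosed K) : IsClosed (hat K) := by
  rw [← isOpen_compl_iff, Metric.isOpen_iff]
  intro p hp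
  have hp' : Esc K p := by simpa [hat] using hp
  have hpK : p ∈ Kᶜ := fun h => subset_hat K h hp'
  obtain ⟨r, hr, hb⟩ := Metric.isOpen_iff.1 hK.isOpen_compl p hpK
  refine ⟨r, hr, fun q hq h => h ?_⟩
  refine hp'.of_joined ?_
  exact (((convex_ball p r).isPathConnected ⟨p, mem_ball_self hr⟩).joinedIn q hq p (mem_ball_self hr)).mono hb

theorem hat_nonsep (K : Set ℂ) : Nonsep (hat K) := by
  intro p hp R
  have hp' : Esc K p := by simpa [hat] using hp
  obtain ⟨q, hq, γ, hγ⟩ := hp' R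
  refine ⟨q, hq, γ, fun t ht => ht ?_⟩
  refine hp'.of_joined (JoinedIn.symm ?_)
  refine ⟨(γ.truncateOfLE t.2.1).cast (by simp) (by simp), fun s => ?_⟩
  have : γ.truncateOfLE t.2.1 s ∈ range γ := by
    have := γ.truncate_range (t₀ := 0) (t₁ := t)
    simp only [Path.truncateOfLE, Path.cast_coe]
    exact this (mem_range_self _)
  obtain ⟨r, hr⟩ := this
  simp only [Path.cast_coe]
  rw [← hr]
  exact hγ r

theorem hat_subset {K L : Set ℂ} (h : K ⊆ L) (hL : Nonsep L) : hat K ⊆ L := by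
  intro p hp
  by_contra hpL
  apply hp
  intro R
  obtain ⟨q, hq, hj⟩ := hL p hpL R
  exact ⟨q, hq, hj.mono (compl_subset_compl.2 h)⟩

theorem Nonsep.inter {A B : Set ℂ} (hA : Nonsep A) (hB : Nonsep B) : Nonsep (A ∩ B) := by
  intro p hp R
  by_cases h : p ∈ A
  · have : p ∉ B := fun h' => hp ⟨h, h'⟩
    obtain ⟨q, hq, hj⟩ := hB p this R
    exact ⟨q, hq, hj.mono (compl_subset_compl.2 inter_subset_right)⟩
  · obtain ⟨q, hq, hj⟩ := hA p h R
    exact ⟨q, hq, hj.mono (compl_subset_compl.2 inter_subset_left)⟩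

theorem nonsep_closedBall (c : ℂ) {r : ℝ} (hr : 0 ≤ r) : Nonsep (closedBall c r) := by
  intro p hp R
  have hpr : r < ‖p - c‖ := by simpa [dist_eq_norm] using hp
  have hpos : 0 < ‖p - c‖ := hr.trans_lt hpr
  set t : ℝ := max 1 ((|R| + ‖c‖ + 1) / ‖p - c‖) with ht
  let f : ℝ → ℂ := fun s => c + s * (p - c)
  have hf : Continuous f := by fun_prop
  have h1 : f 1 = p := by simp [f]
  refine ⟨f t, ?_, ?_⟩
  · have e1 : |R| + ‖c‖ + 1 ≤ t * ‖p - c‖ := by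
      rw [← div_le_iff₀ hpos]; exact le_max_right _ _
    have e2 : ‖(t : ℂ) * (p - c)‖ = t * ‖p - c‖ := by
      rw [norm_mul, Complex.norm_real, Real.norm_of_nonneg (zero_le_one.trans (le_max_left _ _))]
    have e3 : ‖(t : ℂ) * (p - c)‖ ≤ ‖f t‖ + ‖c‖ := by
      have : (t : ℂ) * (p - c) = f t - c := by simp [f]
      rw [this]; exact norm_sub_le _ _
    linarith [le_abs_self R]
  · rw [← h1]
    refine joinedIn_param hf (convex_Ici (1 : ℝ)) ?_ (by simp) (mem_Ici.2 (le_max_left _ _))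
    intro s hs hmem
    have hs1 : (1 : ℝ) ≤ s := hs
    have : ‖(s : ℂ) * (p - c)‖ ≤ r := by simpa [f, dist_eq_norm] using hmem
    rw [norm_mul, Complex.norm_real, Real.norm_of_nonneg (by linarith)] at this
    nlinarith

theorem hat_compact {K : Set ℂ} (hK : IsCompact K) : IsCompact (hat K) := by
  obtain ⟨R, hR⟩ := hK.isBounded.exists_norm_le
  have : hat K ⊆ closedBall 0 (max R 0) := hat_subset (fun z hz => by
    simpa using Or.inl (hR z hz)) (nonsep_closedBall 0 (le_max_right _ _))
  exact (isCompact_closedBall _ _).of_isClosed_subset (hat_closed hK.isClosed) this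

/-- first point of `K` on a segment issued from a point of the hat. -/
theorem hat_seg {K : Set ℂ} (hK : IsClosed K) {p q : ℂ} (hp : p ∈ hat K) (hm : (segment ℝ p q ∩ K).Nonempty) :
    ∃ a ∈ segment ℝ p q ∩ K, segment ℝ p a ⊆ hat K := by
  let f : ℝ → ℂ := fun t => AffineMap.lineMap p q t
  have hf : Continuous f := by simp only [f]; exact AffineMap.lineMap_continuous
  have hfi : f '' Icc 0 1 = segment ℝ p q := by
    rw [segment_eq_image_lineMap]
  set S : Set ℝ := Icc 0 1 ∩ f ⁻¹' K with hS
  have hSc : IsCompact S := isCompact_Icc.inter_right (hK.preimage hf)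
  have hSn : S.Nonempty := by
    obtain ⟨z, hz, hzK⟩ := hm
    rw [← hfi] at hz
    obtain ⟨t, ht, rfl⟩ := hz
    exact ⟨t, ht, hzK⟩
  obtain ⟨t, ⟨ht, htK⟩, hmin⟩ := hSc.exists_isLeast hSn
  have htK : f t ∈ K := htK
  refine ⟨f t, ⟨hfi ▸ ⟨t, ht, rfl⟩, htK⟩, ?_⟩
  have hseg : segment ℝ p (f t) = f '' Icc 0 t := by
    have h0 : f 0 = p := by simp [f]
    rw [← segment_eq_Icc ht.1]
    have := image_segment ℝ (AffineMap.lineMap p q : ℝ →ᵃ[ℝ] ℂ) 0 t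
    rw [AffineMap.lineMap_apply_zero] at this
    exact this.symm
  rw [hseg]
  rintro _ ⟨s, hs, rfl⟩
  rcases hs.2.eq_or_lt with rfl | hlt
  · exact subset_hat K htK
  · refine hat_of_joined hp ?_
    have h0 : f 0 = p := by simp [f]
    rw [← h0]
    refine joinedIn_param hf (convex_Icc 0 s) ?_ ⟨le_rfl, hs.1⟩ ⟨hs.1, le_rfl⟩
    intro r hr hrK
    have := hmin ⟨⟨hr.1, by linarith [hr.2, ht.2]⟩, hrK⟩
    linarith [hr.2]

def PULC (Y : Set ℂ) : Prop := ∀ ε > 0, ∃ δ > 0, ∀ p ∈ Y, ∀ q ∈ Y, dist p q < δ →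
  JoinedIn (Y ∩ closedBall p ε) p q

theorem dist_seg {p q a : ℂ} (h : a ∈ segment ℝ p q) : dist p a ≤ dist p q := by
  have : segment ℝ p q ⊆ closedBall p (dist p q) :=
    (convex_closedBall p _).segment_subset (by simp) (by simp [dist_comm])
  have := this h
  rwa [mem_closedBall, dist_comm] at this

theorem hat_pulc {K : Set ℂ} (hK : IsClosed K) (h : PULC K) : PULC (hat K) := by
  intro ε hε
  obtain ⟨δ, hδ, H⟩ := h (ε / 2) (by positivity)
  refine ⟨min δ (ε / 2), by positivity, fun p hp q hq hpq => ?_⟩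
  obtain ⟨h1, h2⟩ := lt_min_iff.1 hpq
  have hball : segment ℝ p q ⊆ closedBall p ε :=
    (convex_closedBall p _).segment_subset (by simp [hε.le]) (by rw [mem_closedBall, dist_comm]; linarith)
  by_cases hm : (segment ℝ p q ∩ K).Nonempty
  · obtain ⟨a, ⟨ha, haK⟩, hsa⟩ := hat_seg hK hp hm
    obtain ⟨b, ⟨hb, hbK⟩, hsb⟩ := hat_seg hK hq (by rwa [segment_symm])
    rw [segment_symm] at hb
    have cs := convex_segment (𝕜 := ℝ) p q
    have hab : dist a b ≤ dist p q := by
      have s1 : segment ℝ p q ⊆ closedBall b (dist p q) := by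
        refine (convex_closedBall b _).segment_subset ?_ ?_
        · rw [mem_closedBall]; exact dist_seg hb
        · rw [mem_closedBall, dist_comm p q]; rw [segment_symm] at hb; exact dist_seg hb
      exact s1 ha
    have j1 : JoinedIn (hat K ∩ closedBall p ε) p a := joinedIn_segment
      (subset_inter hsa ((cs.segment_subset (left_mem_segment ℝ p q) ha).trans hball))
    have j3 : JoinedIn (hat K ∩ closedBall p ε) b q := (joinedIn_segment
      (subset_inter hsb ((cs.segment_subset (right_mem_segment ℝ p q) hb).trans hball))).symm
    have j2 := H a haK b hbK (hab.trans_lt h1)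
    refine (j1.trans (j2.mono ?_)).trans j3
    refine inter_subset_inter (subset_hat K) ?_
    refine closedBall_subset_closedBall' ?_
    have := dist_seg ha
    rw [dist_comm] at this
    linarith
  · refine joinedIn_segment (subset_inter ?_ hball)
    intro z hz
    refine hat_of_joined hp (joinedIn_segment ?_)
    intro w hw hwK
    exact hm ⟨w, (convex_segment p q).segment_subset (left_mem_segment ℝ p q) hz hw, hwK⟩

theorem hat_pathConnected {K : Set ℂ} (hK : IsClosed K) (h : IsPathConnected K) : IsPathConnected (hat K) := by
  have key : ∀ p ∈ hat K, ∃ a ∈ K, JoinedIn (hat K) p a := by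
    intro p hp
    have hp' : ¬ ∀ R : ℝ, ∃ q, R < ‖q‖ ∧ JoinedIn Kᶜ p q := hp
    push Not at hp'
    obtain ⟨R, hR⟩ := hp'
    have hq : R < ‖((|R| + 1 : ℝ) : ℂ)‖ := by
      rw [Complex.norm_real, Real.norm_of_nonneg (by positivity)]
      linarith [le_abs_self R]
    have hm : (segment ℝ p ((|R| + 1 : ℝ) : ℂ) ∩ K).Nonempty := by
      by_contra hm
      exact hR _ hq (joinedIn_segment fun w hw hwK => hm ⟨w, hw, hwK⟩)
    obtain ⟨a, ⟨_, haK⟩, hs⟩ := hat_seg hK hp hm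
    exact ⟨a, haK, joinedIn_segment hs⟩
  obtain ⟨x, hx, hj⟩ := h
  refine ⟨x, subset_hat K hx, fun {y} hy => ?_⟩
  obtain ⟨a, ha, hya⟩ := key y hy
  exact ((hj ha).mono (subset_hat K)).trans hya.symm

theorem path_pulc {γ : ℝ → ℂ} (hγ : Continuous γ) : PULC (γ '' Icc 0 1) := by
  intro ε hε
  have key : ∃ δ > 0, ∀ z ∈ (Icc 0 1 ×ˢ Icc 0 1 : Set (ℝ × ℝ)), z ∈ (Icc 0 1 ×ˢ Icc 0 1 : Set (ℝ × ℝ)) →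
      dist (γ z.1) (γ z.2) < δ → JoinedIn (γ '' Icc 0 1 ∩ closedBall (γ z.1) ε) (γ z.1) (γ z.2) := by
    refine (isCompact_Icc.prod isCompact_Icc).induction_on (p := fun s => ∃ δ > 0, ∀ z ∈ s,
      z ∈ (Icc 0 1 ×ˢ Icc 0 1 : Set (ℝ × ℝ)) → dist (γ z.1) (γ z.2) < δ →
      JoinedIn (γ '' Icc 0 1 ∩ closedBall (γ z.1) ε) (γ z.1) (γ z.2)) ⟨1, one_pos, by simp⟩ ?_ ?_ ?_
    · rintro s t hst ⟨δ, h, h'⟩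
      exact ⟨δ, h, fun z hz => h' z (hst hz)⟩
    · rintro s t ⟨ρ, h, h'⟩ ⟨σ, g, g'⟩
      refine ⟨min ρ σ, lt_min h g, ?_⟩
      rintro z (hz | hz) hz' hd
      · exact h' z hz hz' (lt_min_iff.1 hd).1
      · exact g' z hz hz' (lt_min_iff.1 hd).2
    · rintro ⟨s, t⟩ ⟨hs, ht⟩
      simp only at hs ht
      by_cases heq : γ s = γ t
      · obtain ⟨r1, hr1, H1⟩ := Metric.continuousAt_iff.1 (hγ.continuousAt (x := s)) (ε / 2) (by positivity)
        obtain ⟨r2, hr2, H2⟩ := Metric.continuousAt_iff.1 (hγ.continuousAt (x := t)) (ε / 2) (by positivity)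
        refine ⟨ball s r1 ×ˢ ball t r2, mem_nhdsWithin_of_mem_nhds
          (prod_mem_nhds (ball_mem_nhds _ hr1) (ball_mem_nhds _ hr2)), 1, one_pos, ?_⟩
        rintro ⟨a, b⟩ ⟨ha, hb⟩ ⟨ha', hb'⟩ _
        simp only at *
        have j1 : JoinedIn (γ '' Icc 0 1 ∩ closedBall (γ a) ε) (γ a) (γ s) := by
          refine joinedIn_param hγ ((convex_Icc (0 : ℝ) 1).inter (convex_ball s r1)) ?_ ⟨ha', ha⟩
            ⟨hs, mem_ball_self hr1⟩
          rintro c ⟨hc, hc'⟩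
          refine ⟨⟨c, hc, rfl⟩, ?_⟩
          rw [mem_closedBall]
          have e1 := H1 hc'
          have e2 := H1 ha
          linarith [dist_triangle_right (γ c) (γ a) (γ s)]
        have j2 : JoinedIn (γ '' Icc 0 1 ∩ closedBall (γ a) ε) (γ t) (γ b) := by
          refine joinedIn_param hγ ((convex_Icc (0 : ℝ) 1).inter (convex_ball t r2)) ?_
            ⟨ht, mem_ball_self hr2⟩ ⟨hb', hb⟩
          rintro c ⟨hc, hc'⟩
          refine ⟨⟨c, hc, rfl⟩, ?_⟩
          rw [mem_closedBall]
          have e1 := H2 hc'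
          have e2 := H1 ha
          rw [heq] at e2
          linarith [dist_triangle_right (γ c) (γ a) (γ t)]
        rw [heq] at j1
        exact j1.trans j2
      · have hpos : 0 < dist (γ s) (γ t) := dist_pos.2 heq
        have hc : Continuous (fun z : ℝ × ℝ => dist (γ z.1) (γ z.2)) := by fun_prop
        have hev : ∀ᶠ z in nhds (s, t), dist (γ s) (γ t) / 2 < dist (γ z.1) (γ z.2) :=
          continuousAt_const.eventually_lt hc.continuousAt (by simpa using hpos)
        refine ⟨_, mem_nhdsWithin_of_mem_nhds hev, dist (γ s) (γ t) / 2, by positivity, ?_⟩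
        intro z hz _ hlt
        have hz : dist (γ s) (γ t) / 2 < dist (γ z.1) (γ z.2) := hz
        exact absurd hlt (not_lt.2 hz.le)
  obtain ⟨δ, hδ, H⟩ := key
  refine ⟨δ, hδ, ?_⟩
  rintro _ ⟨s, hs, rfl⟩ _ ⟨t, ht, rfl⟩ hd
  exact H (s, t) ⟨hs, ht⟩ ⟨hs, ht⟩ hd

end
end Tri

namespace Tri
section
open Metric Set unitInterval

theorem log_exists {E : Type} [NormedAddCommGroup E] [NormedSpace ℝ E] {g : E → ℂ} (hg : Continuous g)
    (h0 : ∀ x, g x ≠ 0) : ∃ f : E → ℂ, Continuous f ∧ ∀ x, Complex.exp (f x) = g x := by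
  have hs : IsSimplyConnected (univ : Set E) := by
    have : ContractibleSpace (univ : Set E) := convex_univ.contractibleSpace univ_nonempty
    exact (inferInstance : SimplyConnectedSpace (univ : Set E))
  obtain ⟨f, hf, he⟩ := Complex.exists_continuousOn_eqOn_exp_comp hs isOpen_univ hg.continuousOn
    (by rintro ⟨x, _, hx⟩; exact h0 x hx)
  exact ⟨f, continuousOn_univ.1 hf, fun x => he (mem_univ x)⟩

theorem exp_const {f : ℝ → ℂ} (hf : Continuous f) (h : ∀ s t, Complex.exp (f s) = Complex.exp (f t)) (s t : ℝ) :
    f s = f t := by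
  refine Complex.isCoveringMap_exp.const_of_comp hf ?_ s t
  intro a b
  exact Subtype.ext (h a b)

/-- The continuous logarithm along a curve in a simply connected set missing `p` takes equal values
at parameters with equal image. -/
theorem log_consistent {S : Set ℂ} (hS : SimplyConnectedSpace S) {p : ℂ} (hp : p ∉ S) {x y : S}
    (γ : Path x y) {L : ℝ → ℂ} (hL : Continuous L)
    (hLe : ∀ t : I, Complex.exp (L t) = (γ t : ℂ) - p) (s t : I) (hst : γ s = γ t) : L s = L t := by
  obtain ⟨F⟩ := SimplyConnectedSpace.paths_homotopic (γ.subpath s t)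
    ((Path.refl (γ s)).cast rfl hst.symm)
  let π : ℝ → I := projIcc 0 1 zero_le_one
  have hπ : Continuous π := continuous_projIcc
  let g : ℝ × ℝ → ℂ := fun z => (F (π z.1, π z.2) : ℂ) - p
  have hg : Continuous g := by
    have : Continuous (fun z : ℝ × ℝ => F (π z.1, π z.2)) := by fun_prop
    fun_prop
  obtain ⟨Λ, hΛ, hΛe⟩ := log_exists hg (by
    intro z h
    apply hp
    have : (F (π z.1, π z.2) : ℂ) = p := sub_eq_zero.1 h
    rw [← this]
    exact Subtype.coe_prop _)
  have hπ0 : π 0 = 0 := projIcc_left ..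
  have hπ1 : π 1 = 1 := projIcc_right ..
  have c1 : Λ (0, 0) = Λ (1, 0) := by
    refine exp_const (f := fun r => Λ (r, 0)) (by fun_prop) ?_ 0 1
    intro a b
    simp only [hΛe, g, hπ0]
    rw [F.source, F.source]
  have c2 : Λ (1, 0) = Λ (1, 1) := by
    refine exp_const (f := fun r => Λ (1, r)) (by fun_prop) ?_ 0 1
    intro a b
    simp only [hΛe, g, hπ1]
    rw [F.apply_one, F.apply_one]
    simp
  have c3 : Λ (0, 1) = Λ (1, 1) := by
    refine exp_const (f := fun r => Λ (r, 1)) (by fun_prop) ?_ 0 1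
    intro a b
    simp only [hΛe, g, hπ1]
    rw [F.target, F.target]
  let sgm : ℝ → I := fun r => Icc.convexComb s t (π r)
  have hsgm : Continuous sgm := by
    simp only [sgm]
    fun_prop
  have c4 : ∀ a b, L (sgm a) - Λ (0, a) = L (sgm b) - Λ (0, b) := by
    refine exp_const (f := fun r => L (sgm r) - Λ (0, r)) (by fun_prop) ?_
    have : ∀ a, Complex.exp (L (sgm a) - Λ (0, a)) = 1 := by
      intro a
      have e : Complex.exp (L (sgm a)) = Complex.exp (Λ (0, a)) := by
        rw [hLe, hΛe]
        simp only [g, hπ0]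
        rw [F.apply_zero]
        rfl
      rw [Complex.exp_sub, e, div_self (Complex.exp_ne_zero _)]
    intro a b
    rw [this, this]
  have := c4 0 1
  have s0 : sgm 0 = s := by simp [sgm, hπ0]
  have s1 : sgm 1 = t := by simp [sgm, hπ1]
  rw [s0, s1, c1, c2, ← c3] at this
  exact sub_left_inj.1 this

theorem borsuk {S : Set ℂ} (hS : SimplyConnectedSpace S) {x y : S} (γ : Path x y) :
    hat (range fun t => (γ t : ℂ)) ⊆ S := by
  classical
  intro p hpK
  by_contra hp
  set K := range fun t => (γ t : ℂ) with hK
  have hγc : Continuous fun t => (γ t : ℂ) := by fun_prop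
  have hKc : IsCompact K := isCompact_range hγc
  have hKS : K ⊆ S := by rintro _ ⟨t, rfl⟩; exact Subtype.coe_prop _
  let π : ℝ → I := projIcc 0 1 zero_le_one
  have hπ : Continuous π := continuous_projIcc
  obtain ⟨L, hL, hLe⟩ := log_exists (g := fun t : ℝ => (γ (π t) : ℂ) - p) (by fun_prop) (by
    intro t h
    exact hp ((sub_eq_zero.1 h) ▸ Subtype.coe_prop _))
  have hLe' : ∀ t : I, Complex.exp (L t) = (γ t : ℂ) - p := by
    intro t; rw [hLe]; simp [π]
  have cons := log_consistent hS hp γ hL hLe'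
  let q : I → K := fun t => ⟨γ t, t, rfl⟩
  have hq : Continuous q := by fun_prop
  have hqs : Function.Surjective q := by
    rintro ⟨_, t, rfl⟩; exact ⟨t, rfl⟩
  have hqq : Topology.IsQuotientMap q := hq.isClosedMap.isQuotientMap hq hqs
  let rv : K → I := Function.surjInv hqs
  have hrv : ∀ z, q (rv z) = z := Function.surjInv_eq hqs
  have hcont : Continuous (fun z : K => L (rv z)) := by
    rw [hqq.continuous_iff]
    have : ((fun z : K => L (rv z)) ∘ q) = fun t : I => L t := by
      funext t
      refine cons _ _ (Subtype.ext ?_)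
      have := congrArg (Subtype.val : K → ℂ) (hrv (q t))
      exact this
    rw [this]; fun_prop
  let ℓ : C(K, ℂ) := ⟨fun z => L (rv z), hcont⟩
  obtain ⟨M, hM⟩ := ContinuousMap.exists_restrict_eq hKc.isClosed ℓ
  have hMe : ∀ z ∈ K, Complex.exp (M z) = z - p := by
    intro z hz
    have e1 : M z = ℓ ⟨z, hz⟩ := by rw [← hM]; rfl
    rw [e1]
    change Complex.exp (L (rv ⟨z, hz⟩)) = _
    rw [hLe']
    have := congrArg Subtype.val (hrv ⟨z, hz⟩)
    simp only [q] at this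
    rw [this]
  have hpK' : p ∈ Kᶜ := fun h => hp (hKS h)
  let V : Set ℂ := {z | JoinedIn Kᶜ p z}
  have hpe : ¬ ∀ R : ℝ, ∃ q, R < ‖q‖ ∧ JoinedIn Kᶜ p q := hpK
  push Not at hpe
  obtain ⟨R, hR⟩ := hpe
  have hball : ∀ z ∈ Kᶜ, ∃ r > 0, ∀ w ∈ ball z r, JoinedIn Kᶜ z w := by
    intro z hz
    obtain ⟨r, hr, hb⟩ := Metric.isOpen_iff.1 hKc.isClosed.isOpen_compl z hz
    exact ⟨r, hr, fun w hw => (((convex_ball z r).isPathConnected ⟨z, mem_ball_self hr⟩).joinedIn z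
      (mem_ball_self hr) w hw).mono hb⟩
  have hVo : IsOpen V := by
    rw [Metric.isOpen_iff]
    intro z hz
    obtain ⟨r, hr, h⟩ := hball z (JoinedIn.target_mem hz)
    exact ⟨r, hr, fun w hw => JoinedIn.trans hz (h w hw)⟩
  have hVf : frontier V ⊆ K := by
    intro z hz
    by_contra hzK
    obtain ⟨r, hr, h⟩ := hball z hzK
    rw [hVo.frontier_eq] at hz
    obtain ⟨w, hw, hzw⟩ := Metric.mem_closure_iff.1 hz.1 r hr
    exact hz.2 (JoinedIn.trans hw (h w (by rwa [mem_ball, dist_comm])).symm)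
  let G : ℂ → ℂ := fun z => if z ∈ V then Complex.exp (M z) else z - p
  have hG : Continuous G := by
    refine Continuous.if ?_ (by fun_prop) (by fun_prop)
    intro a ha
    exact hMe a (hVf ha)
  obtain ⟨Λ, hΛ, hΛe⟩ := log_exists hG (by
    intro z
    simp only [G]
    split_ifs with h
    · exact Complex.exp_ne_zero _
    · intro h'
      rw [sub_eq_zero] at h'
      exact h (h' ▸ JoinedIn.refl hpK'))
  set r : ℝ := |R| + ‖p‖ + 1 with hr
  have hr0 : 0 < r := by positivity
  let c : ℝ → ℂ := fun θ => p + r * Complex.exp (θ * Complex.I)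
  have hc : Continuous c := by fun_prop
  have hcV : ∀ θ, c θ ∉ V := by
    intro θ h
    refine hR (c θ) ?_ h
    have e1 : ‖(r : ℂ) * Complex.exp (θ * Complex.I)‖ = r := by
      rw [norm_mul, Complex.norm_exp_ofReal_mul_I, Complex.norm_real, Real.norm_of_nonneg hr0.le, mul_one]
    have e2 : ‖(r : ℂ) * Complex.exp (θ * Complex.I)‖ ≤ ‖c θ‖ + ‖p‖ := by
      have : (r : ℂ) * Complex.exp (θ * Complex.I) = c θ - p := by simp [c]
      rw [this]; exact norm_sub_le _ _
    linarith [le_abs_self R]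
  have hconst := exp_const (f := fun θ : ℝ => Λ (c θ) - θ * Complex.I) (by fun_prop) (by
    have : ∀ θ : ℝ, Complex.exp (Λ (c θ) - θ * Complex.I) = r := by
      intro θ
      rw [Complex.exp_sub, hΛe]
      simp only [G, hcV, if_false, c, add_sub_cancel_left]
      field_simp
    intro a b
    rw [this, this]) 0 (2 * Real.pi)
  have h2 : c (2 * Real.pi) = c 0 := by simp [c, Complex.exp_two_pi_mul_I]
  simp only [h2] at hconst
  have : (2 * Real.pi : ℂ) * Complex.I = 0 := by
    push_cast at hconst
    linear_combination hconst
  exact Complex.two_pi_I_ne_zero this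

end
end Tri

namespace Tri
section
open Metric Set unitInterval

/-- concatenations of small arcs with endpoints in `E` -/
inductive Arc (E : Set ℂ) (ε δ : ℝ) : ∀ {a b : ℂ}, Path a b → Prop
  | cell {a b : ℂ} (ha : a ∈ E) (hb : b ∈ E) (hab : dist a b < δ) (p : Path a b)
      (hp : ∀ t, p t ∈ closedBall a ε) : Arc E ε δ p
  | trans {a b c : ℂ} {p : Path a b} {q : Path b c} (hp : Arc E ε δ p) (hq : Arc E ε δ q) :
      Arc E ε δ (p.trans q)

theorem trans_forall {a b c : ℂ} {p : Path a b} {q : Path b c} {P : ℂ → Prop} (h1 : ∀ t, P (p t))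
    (h2 : ∀ t, P (q t)) (t : I) : P (p.trans q t) := by
  rw [Path.trans_apply]
  split_ifs
  · exact h1 _
  · exact h2 _

theorem trans_dist {a b c : ℂ} {p p' : Path a b} {q q' : Path b c} {r : ℝ} (h1 : ∀ t, dist (p t) (p' t) ≤ r)
    (h2 : ∀ t, dist (q t) (q' t) ≤ r) (t : I) : dist (p.trans q t) (p'.trans q' t) ≤ r := by
  rw [Path.trans_apply, Path.trans_apply]
  split_ifs
  · exact h1 _
  · exact h2 _

theorem Arc.near {E : Set ℂ} {ε δ : ℝ} {a b : ℂ} {p : Path a b} (h : Arc E ε δ p) :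
    ∀ t, ∃ e ∈ E, dist (p t) e ≤ ε := by
  induction h with
  | cell ha hb hab p hp => exact fun t => ⟨_, ha, hp t⟩
  | trans hp hq ih1 ih2 => exact trans_forall (P := fun z => ∃ e ∈ E, dist z e ≤ ε) ih1 ih2

theorem arc_of_preconnected {E C : Set ℂ} {c : ℂ} {r ε δ : ℝ} (hδ : 0 < δ) (hδε : δ ≤ ε)
    (hC : IsPreconnected C) (hCE : C ⊆ E ∩ closedBall c r) {p q : ℂ} (hp : p ∈ C) (hq : q ∈ C) :
    ∃ P : Path p q, Arc E ε δ P ∧ ∀ t, P t ∈ closedBall c r := by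
  have base : ∀ a ∈ C, ∀ b ∈ C, dist a b < δ → ∃ P : Path a b, Arc E ε δ P ∧ ∀ t, P t ∈ closedBall c r := by
    intro a ha b hb hab
    obtain ⟨P, hP⟩ := joinedIn_segment (S := segment ℝ a b) (p := a) (q := b) subset_rfl
    refine ⟨P, Arc.cell (hCE ha).1 (hCE hb).1 hab P ?_, ?_⟩
    · intro t
      have := dist_seg (hP t)
      rw [mem_closedBall, dist_comm]
      linarith
    · intro t
      exact (convex_closedBall c r).segment_subset (hCE ha).2 (hCE hb).2 (hP t)
  refine (IsPreconnected.induction₂ hC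
    (fun a b => (∃ P : Path a b, Arc E ε δ P ∧ ∀ t, P t ∈ closedBall c r) ∧
      ∃ P : Path b a, Arc E ε δ P ∧ ∀ t, P t ∈ closedBall c r) ?_ ?_ ?_ hp hq).1
  · intro a ha
    filter_upwards [mem_nhdsWithin_of_mem_nhds (ball_mem_nhds a hδ), self_mem_nhdsWithin] with b hb hbC
    rw [mem_ball] at hb
    exact ⟨base a ha b hbC (by rwa [dist_comm]), base b hbC a ha hb⟩
  · rintro a b d _ _ _ ⟨⟨P1, h1, h1'⟩, P2, h2, h2'⟩ ⟨⟨Q1, g1, g1'⟩, Q2, g2, g2'⟩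
    exact ⟨⟨P1.trans Q1, h1.trans g1, trans_forall h1' g1'⟩, ⟨Q2.trans P2, g2.trans h2, trans_forall g2' h2'⟩⟩
  · rintro a b _ _ ⟨h1, h2⟩
    exact ⟨h2, h1⟩

theorem Arc.refine {E : Set ℂ} {ε δ ε' δ' : ℝ} (hδ' : 0 < δ') (h' : δ' ≤ ε')
    (H : ∀ p ∈ E, ∀ q ∈ E, dist p q < δ → ∃ C ⊆ E ∩ closedBall p ε, IsPreconnected C ∧ p ∈ C ∧ q ∈ C)
    {a b : ℂ} {p : Path a b} (h : Arc E ε δ p) :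
    ∃ p' : Path a b, Arc E ε' δ' p' ∧ ∀ t, dist (p t) (p' t) ≤ 2 * ε := by
  induction h with
  | cell ha hb hab p hp =>
    obtain ⟨C, hC, hpre, haC, hbC⟩ := H _ ha _ hb hab
    obtain ⟨P, hP, hPb⟩ := arc_of_preconnected hδ' h' hpre hC haC hbC
    refine ⟨P, hP, fun t => ?_⟩
    have h1 := hp t
    have h2 := hPb t
    rw [mem_closedBall] at h1 h2
    exact (dist_triangle_right _ _ _).trans (by linarith [add_le_add h1 h2])
  | trans hp hq ih1 ih2 =>
    obtain ⟨p', h1, h2⟩ := ih1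
    obtain ⟨q', h3, h4⟩ := ih2
    exact ⟨p'.trans q', h1.trans h3, trans_dist h2 h4⟩

theorem path_of_ulc {T E : Set ℂ} (hT : IsClosed T) (hET : E ⊆ T) (hEb : Bornology.IsBounded E)
    (hE : IsPreconnected E)
    (H : ∀ ε > 0, ∃ δ > 0, ∀ p ∈ E, ∀ q ∈ E, dist p q < δ → ∃ C ⊆ E ∩ closedBall p ε, IsPreconnected C ∧ p ∈ C ∧ q ∈ C)
    {x y : ℂ} (hx : x ∈ E) (hy : y ∈ E) : JoinedIn T x y := by
  have H' : ∀ k : ℕ, ∃ δ > 0, δ ≤ (1 / 2 : ℝ) ^ k ∧ ∀ p ∈ E, ∀ q ∈ E, dist p q < δ →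
      ∃ C ⊆ E ∩ closedBall p ((1 / 2 : ℝ) ^ k), IsPreconnected C ∧ p ∈ C ∧ q ∈ C := by
    intro k
    obtain ⟨δ, hδ, h⟩ := H ((1 / 2 : ℝ) ^ k) (by positivity)
    exact ⟨min δ ((1 / 2 : ℝ) ^ k), by positivity, min_le_right _ _, fun p hp q hq hpq =>
      h p hp q hq (lt_min_iff.1 hpq).1⟩
  choose δ hδ hδk hC using H'
  obtain ⟨R, hR⟩ := hEb.subset_closedBall x
  obtain ⟨P0, hP0, _⟩ := arc_of_preconnected (c := x) (r := R) (hδ 0) (hδk 0) hE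
    (subset_inter subset_rfl hR) hx hy
  let St (k : ℕ) := {p : Path x y // Arc E ((1 / 2 : ℝ) ^ k) (δ k) p}
  have step : ∀ k (p : St k), ∃ p' : St (k + 1), ∀ t, dist (p.1 t) (p'.1 t) ≤ 2 * (1 / 2 : ℝ) ^ k := by
    rintro k ⟨p, hp⟩
    obtain ⟨p', h1, h2⟩ := hp.refine (hδ (k + 1)) (hδk (k + 1)) (hC k)
    exact ⟨⟨p', h1⟩, h2⟩
  choose nxt hnxt using step
  let s : ∀ k, St k := fun k => Nat.rec ⟨P0, hP0⟩ (fun k p => nxt k p) k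
  have hs : ∀ k, s (k + 1) = nxt k (s k) := fun k => rfl
  let f : ℕ → C(I, ℂ) := fun k => (s k).1.toContinuousMap
  have hf : ∀ k, dist (f k) (f (k + 1)) ≤ 2 * (1 / 2 : ℝ) ^ k := by
    intro k
    rw [ContinuousMap.dist_le (by positivity)]
    intro t
    change dist ((s k).1 t) ((s (k + 1)).1 t) ≤ _
    rw [hs]
    exact hnxt k (s k) t
  have hcau := cauchySeq_of_le_geometric (1 / 2 : ℝ) 2 (by norm_num) hf
  obtain ⟨g, hg⟩ := cauchySeq_tendsto_of_complete hcau
  have hgt : ∀ t, Filter.Tendsto (fun k => (s k).1 t) Filter.atTop (nhds (g t)) := fun t =>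
    ((continuous_eval_const t).tendsto g).comp hg
  have g0 : g 0 = x := by
    refine tendsto_nhds_unique (hgt 0) ?_
    simp
  have g1 : g 1 = y := by
    refine tendsto_nhds_unique (hgt 1) ?_
    simp
  refine ⟨⟨g, g0, g1⟩, fun t => ?_⟩
  have : g t ∈ closure E := by
    rw [Metric.mem_closure_iff]
    intro ε hε
    have e1 := (Metric.tendsto_nhds.1 (hgt t)) (ε / 2) (by positivity)
    have e2 : ∀ᶠ k : ℕ in Filter.atTop, (1 / 2 : ℝ) ^ k < ε / 2 :=
      (tendsto_pow_atTop_nhds_zero_of_lt_one (by norm_num) (by norm_num)).eventually_lt_const (by positivity)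
    obtain ⟨k, h1, h2⟩ := (e1.and e2).exists
    obtain ⟨e, he, hd⟩ := (s k).2.near t
    refine ⟨e, he, ?_⟩
    linarith [dist_triangle_left (g t) e ((s k).1 t)]
  exact closure_minimal hET hT this

theorem joinedIn_pre {S : Set ℂ} {p q : ℂ} (h : JoinedIn S p q) :
    ∃ W ⊆ S, IsPreconnected W ∧ p ∈ W ∧ q ∈ W := by
  obtain ⟨γ, hγ⟩ := h
  refine ⟨range γ, by rintro _ ⟨t, rfl⟩; exact hγ t, isPreconnected_range γ.continuous, ⟨0, by simp⟩, ⟨1, by simp⟩⟩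

theorem triple_path {Z0 Z1 Z2 : Set ℂ} (c0 : IsCompact Z0) (c1 : IsCompact Z1) (c2 : IsCompact Z2)
    (n0 : Nonsep Z0) (n1 : Nonsep Z1) (n2 : Nonsep Z2) (u0 : PULC Z0) (u1 : PULC Z1) (u2 : PULC Z2)
    {x y : ℂ} (j01 : JoinedIn (Z0 ∩ Z1) x y) (j02 : JoinedIn (Z0 ∩ Z2) x y) (j12 : JoinedIn (Z1 ∩ Z2) x y) :
    JoinedIn (Z0 ∩ Z1 ∩ Z2) x y := by
  obtain ⟨W01, s01, p01, x01, y01⟩ := joinedIn_pre j01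
  obtain ⟨W02, s02, p02, x02, y02⟩ := joinedIn_pre j02
  obtain ⟨W12, s12, p12, x12, y12⟩ := joinedIn_pre j12
  have hy := helly c0 c1 c2 n0 n1 n2 p01 p02 p12 s01 s02 s12 x01 x02 x12 y01 y02 y12
  set T := Z0 ∩ Z1 ∩ Z2 with hT
  have cT : IsCompact T := (c0.inter c1).inter c2
  have hxT : x ∈ T := ⟨s01 x01, (s02 x02).2⟩
  set E := connectedComponentIn T x with hE
  have hET : E ⊆ T := connectedComponentIn_subset T x
  have hEp : IsPreconnected E := isPreconnected_connectedComponentIn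
  refine path_of_ulc cT.isClosed hET (cT.isBounded.subset hET) hEp ?_ (mem_connectedComponentIn hxT) hy
  intro ε hε
  obtain ⟨δ0, h0, H0⟩ := u0 ε hε
  obtain ⟨δ1, h1, H1⟩ := u1 ε hε
  obtain ⟨δ2, h2, H2⟩ := u2 ε hε
  refine ⟨min δ0 (min δ1 δ2), by positivity, ?_⟩
  intro p hp q hq hpq
  obtain ⟨d0, d'⟩ := lt_min_iff.1 hpq
  obtain ⟨d1, d2⟩ := lt_min_iff.1 d'
  have hpT := hET hp
  have hqT := hET hq
  obtain ⟨V0, a0, b0, e0, f0⟩ := joinedIn_pre (H0 p hpT.1.1 q hqT.1.1 d0)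
  obtain ⟨V1, a1, b1, e1, f1⟩ := joinedIn_pre (H1 p hpT.1.2 q hqT.1.2 d1)
  obtain ⟨V2, a2, b2, e2, f2⟩ := joinedIn_pre (H2 p hpT.2 q hqT.2 d2)
  have cB := isCompact_closedBall p ε
  have nB := nonsep_closedBall p hε.le
  have k1 := helly c0 c1 cB n0 n1 nB hEp b0 b1 (hET.trans inter_subset_left) a0 a1 hp e0 e1 hq f0 f1
  have k2 := helly (c0.inter c1) c2 cB (n0.inter n1) n2 nB hEp
    (isPreconnected_connectedComponentIn (F := Z0 ∩ Z1 ∩ closedBall p ε) (x := p)) b2 hET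
    (connectedComponentIn_subset _ _) a2 hp (mem_connectedComponentIn ⟨hpT.1, (a0 e0).2⟩) e2 hq k1 f2
  refine ⟨connectedComponentIn (Z0 ∩ Z1 ∩ Z2 ∩ closedBall p ε) p, ?_, isPreconnected_connectedComponentIn,
    mem_connectedComponentIn ⟨hpT, (a0 e0).2⟩, k2⟩
  have hsub := connectedComponentIn_subset (Z0 ∩ Z1 ∩ Z2 ∩ closedBall p ε) p
  refine subset_inter ?_ (hsub.trans inter_subset_right)
  rw [hE, connectedComponentIn_eq hp]
  exact isPreconnected_connectedComponentIn.subset_connectedComponentIn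
    (mem_connectedComponentIn ⟨hpT, (a0 e0).2⟩) (hsub.trans inter_subset_left)

theorem borsuk' {S : Set ℂ} (hS : SimplyConnectedSpace S) {x y : ℂ} (γ : Path x y) (h : ∀ t, γ t ∈ S) :
    hat (range γ) ⊆ S := by
  let γ' : Path (⟨x, by simpa using h 0⟩ : S) ⟨y, by simpa using h 1⟩ :=
    { toFun := fun t => ⟨γ t, h t⟩
      continuous_toFun := by fun_prop
      source' := by simp
      target' := by simp }
  exact borsuk hS γ'

theorem range_pulc {x y : ℂ} (γ : Path x y) : PULC (range γ) := by
  have : range γ = γ.extend '' Icc 0 1 := by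
    ext z; constructor
    · rintro ⟨t, rfl⟩
      exact ⟨t, t.2, by simp⟩
    · rintro ⟨t, ht, rfl⟩
      exact ⟨⟨t, ht⟩, by rw [Path.extend_apply _ ht]⟩
  rw [this]
  exact path_pulc γ.continuous_extend

theorem joined_triple {S0 S1 S2 : Set ℂ} (h0 : SimplyConnectedSpace S0) (h1 : SimplyConnectedSpace S1)
    (h2 : SimplyConnectedSpace S2) {x y : ℂ} (j01 : JoinedIn (S0 ∩ S1) x y) (j02 : JoinedIn (S0 ∩ S2) x y)
    (j12 : JoinedIn (S1 ∩ S2) x y) : JoinedIn (S0 ∩ S1 ∩ S2) x y := by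
  obtain ⟨A, hA⟩ := j01
  obtain ⟨B, hB⟩ := j12
  obtain ⟨C, hC⟩ := j02
  have sub : ∀ {P Q : Path x y}, range P ∪ range Q = range (P.trans Q.symm) := by
    intro P Q; rw [Path.trans_range, Path.symm_range]
  have key : ∀ (P Q : Path x y) (S : Set ℂ), SimplyConnectedSpace S → (∀ t, P t ∈ S) → (∀ t, Q t ∈ S) →
      ∃ Z ⊆ S, IsCompact Z ∧ Nonsep Z ∧ PULC Z ∧ (∀ t, P t ∈ Z) ∧ (∀ t, Q t ∈ Z) := by
    intro P Q S hS hP hQ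
    have hc : IsCompact (range (P.trans Q.symm)) := isCompact_range (P.trans Q.symm).continuous
    refine ⟨hat (range (P.trans Q.symm)), borsuk' hS _ (trans_forall hP fun t => hQ _), hat_compact hc,
      hat_nonsep _, hat_pulc hc.isClosed (range_pulc _), fun t => subset_hat _ ?_, fun t => subset_hat _ ?_⟩
    · rw [← sub]; exact Or.inl ⟨t, rfl⟩
    · rw [← sub]; exact Or.inr ⟨t, rfl⟩
  obtain ⟨Z0, s0, c0, n0, u0, A0, C0⟩ := key A C S0 h0 (fun t => (hA t).1) (fun t => (hC t).1)
  obtain ⟨Z1, s1, c1, n1, u1, A1, B1⟩ := key A B S1 h1 (fun t => (hA t).2) (fun t => (hB t).1)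
  obtain ⟨Z2, s2, c2, n2, u2, B2, C2⟩ := key B C S2 h2 (fun t => (hB t).2) (fun t => (hC t).2)
  exact (triple_path c0 c1 c2 n0 n1 n2 u0 u1 u2 ⟨A, fun t => ⟨A0 t, A1 t⟩⟩ ⟨C, fun t => ⟨C0 t, C2 t⟩⟩
    ⟨B, fun t => ⟨B1 t, B2 t⟩⟩).mono (inter_subset_inter (inter_subset_inter s0 s1) s2)

end
end Tri

namespace Tri
section
open Metric Set unitInterval

theorem holonomy {Y : Set ℂ} (hY : IsCompact Y) (hn : Nonsep Y) (hu : PULC Y) (hpc : IsPathConnected Y)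
    (G : Type) [Group G] (hol : ∀ a b : Y, Path a b → G)
    (htr : ∀ (a b c : Y) (p : Path a b) (q : Path b c), hol a c (p.trans q) = hol a b p * hol b c q)
    (hho : ∀ (a b : Y) (p q : Path a b), p.Homotopic q → hol a b p = hol a b q)
    {ε : ℝ} (hε : 0 < ε)
    (hsm : ∀ (a : Y) (p : Path a a), (∀ t, dist (p t : ℂ) a ≤ ε) → hol a a p = 1)
    (a : Y) (γ : Path a a) : hol a a γ = 1 := by
  have hrefl : ∀ a, hol a a (Path.refl a) = 1 := fun a => hsm a _ (fun t => by simp [hε.le])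
  have hsymm : ∀ (a b : Y) (p : Path a b), hol b a p.symm = (hol a b p)⁻¹ := by
    intro a b p
    rw [eq_inv_iff_mul_eq_one, ← htr, ← hrefl b]
    exact hho _ _ _ _ ⟨(Path.Homotopy.reflSymmTrans p).symm⟩
  set e := ε / 4 with he
  have hep : 0 < e := by positivity
  have SML : ∀ (c : ℂ) (a b : Y) (p q : Path a b), (∀ t, dist (p t : ℂ) c ≤ 2 * e) →
      (∀ t, dist (q t : ℂ) c ≤ 2 * e) → hol a b p = hol a b q := by
    intro c a b p q hp hq
    have h0 := hp 0
    rw [p.source] at h0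
    have := hsm a (p.trans q.symm) (fun t => by
      have key : ∀ z : Y, dist (z : ℂ) c ≤ 2 * e → dist (z : ℂ) a ≤ ε := fun z hz => by
        have := dist_triangle_right (z : ℂ) a c
        linarith
      apply key
      rw [Path.trans_apply]
      split_ifs
      · exact hp _
      · exact hq _)
    rw [htr, hsymm] at this
    exact mul_inv_eq_one.1 this
  obtain ⟨δ', hδ', Hδ'⟩ := hu e hep
  obtain ⟨δ, hδ, hδe, Hδ⟩ : ∃ δ > 0, δ ≤ e ∧ ∀ p ∈ Y, ∀ q ∈ Y, dist p q < δ → JoinedIn (Y ∩ closedBall p e) p q :=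
    ⟨min δ' e, by positivity, min_le_right _ _, fun p hp q hq h => Hδ' p hp q hq (lt_min_iff.1 h).1⟩
  have hS : ∀ a b : Y, ∃ p : Path a b, dist (a : ℂ) b < δ → ∀ t, dist (p t : ℂ) a ≤ e := by
    intro a b
    by_cases h : dist (a : ℂ) b < δ
    · obtain ⟨γ, hγ⟩ := Hδ a a.2 b b.2 h
      refine ⟨{ toFun := fun t => ⟨γ t, (hγ t).1⟩
                continuous_toFun := by fun_prop
                source' := by simp
                target' := by simp }, fun _ t => (hγ t).2⟩
    · obtain ⟨γ, hγ⟩ := hpc.joinedIn a a.2 b b.2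
      refine ⟨{ toFun := fun t => ⟨γ t, hγ t⟩
                continuous_toFun := by fun_prop
                source' := by simp
                target' := by simp }, fun h' => absurd h' h⟩
  choose S hS using hS
  have TRI : ∀ a b c : Y, dist (a : ℂ) b < δ → dist (b : ℂ) c < δ → dist (a : ℂ) c < δ →
      hol a b (S a b) * hol b c (S b c) = hol a c (S a c) := by
    intro a b c hab hbc hac
    rw [← htr]
    refine SML a a c _ _ (fun t => ?_) (fun t => (hS a c hac t).trans (by linarith))
    rw [Path.trans_apply]
    split_ifs
    · exact (hS a b hab _).trans (by linarith)
    · generalize (⟨2 * (t : ℝ) - 1, _⟩ : I) = s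
      have h1 := hS b c hbc s
      have h2 := dist_triangle ((S b c s : Y) : ℂ) b a
      rw [dist_comm (b : ℂ) a] at h2
      linarith
  set η := δ / 8 with hηd
  have hη : 0 < η := by positivity
  obtain ⟨d0, hd0, HGV⟩ := GV hY hn hη
  obtain ⟨d, hd, hdd0, hdη, hde⟩ : ∃ d > 0, d < d0 ∧ 2 * d < η ∧ d ≤ e :=
    ⟨min (d0 / 2) (min (η / 4) e), by positivity,
      (min_le_left _ _).trans_lt (by linarith),
      by linarith [(min_le_right (d0 / 2) (min (η / 4) e)).trans (min_le_left _ _)],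
      (min_le_right _ _).trans (min_le_right _ _)⟩
  have hP : ∀ i j : ℤ, ∃ p : Y, gv d i j ∈ thickening η Y → dist (gv d i j) p < η := by
    intro i j
    by_cases h : gv d i j ∈ thickening η Y
    · obtain ⟨y, hy, h'⟩ := mem_thickening_iff.1 h
      exact ⟨⟨y, hy⟩, fun _ => h'⟩
    · exact ⟨a, fun h' => absurd h' h⟩
  choose P hP using hP
  have PP : ∀ i j, sq d i j ⊆ thickening η Y → ∀ m n m' n', gv d m n ∈ sq d i j → gv d m' n' ∈ sq d i j →
      dist (P m n : ℂ) (P m' n') < δ := by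
    intro i j hs m n m' n' h h'
    have h1 := hP m n (hs h)
    have h2 := hP m' n' (hs h')
    have h3 := sq_dist' hd h h'
    have h4 := dist_triangle4 (P m n : ℂ) (gv d m n) (gv d m' n') (P m' n')
    rw [dist_comm (P m n : ℂ) (gv d m n)] at h4
    linarith
  obtain ⟨u, hU⟩ := HGV d hd hdd0 G (fun i j => hol _ _ (S (P i j) (P (i + 1) j)))
    (fun i j => hol _ _ (S (P i j) (P i (j + 1)))) (by
      intro i j hs
      obtain ⟨g1, g2, g3, g4⟩ := gv_mem hd i j
      unfold Flat
      simp only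
      rw [TRI, TRI]
      all_goals apply PP i j hs <;> assumption)
  have PA : ∀ (x : Y) i j, (x : ℂ) ∈ sq d i j → ∀ m n, gv d m n ∈ sq d i j → dist (P m n : ℂ) x < δ / 2 := by
    intro x i j hx m n hmn
    have h1 := hP m n (sq_sub hd hdη ⟨x, hx, x.2⟩ hmn)
    have h2 := sq_dist' hd hmn hx
    have h3 := dist_triangle_left (P m n : ℂ) x (gv d m n)
    linarith
  have corner : ∀ (x : Y) i j, (x : ℂ) ∈ sq d i j →
      u (i + 1) j * hol _ _ (S (P (i + 1) j) x) = u i j * hol _ _ (S (P i j) x) ∧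
      u i (j + 1) * hol _ _ (S (P i (j + 1)) x) = u i j * hol _ _ (S (P i j) x) ∧
      u (i + 1) (j + 1) * hol _ _ (S (P (i + 1) (j + 1)) x) = u i j * hol _ _ (S (P i j) x) := by
    intro x i j hx
    have hs := sq_sub hd hdη ⟨(x : ℂ), hx, x.2⟩
    obtain ⟨g1, g2, g3, g4⟩ := gv_mem hd i j
    obtain ⟨p1, p2, p3, p4⟩ := hU i j ⟨x, hx, x.2⟩
    have A : ∀ m n, gv d m n ∈ sq d i j → dist (P m n : ℂ) x < δ := fun m n h =>
      (PA x i j hx m n h).trans (by linarith)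
    have c1 : u (i + 1) j * hol _ _ (S (P (i + 1) j) x) = u i j * hol _ _ (S (P i j) x) := by
      rw [← p1, mul_assoc, TRI]
      · exact PP i j hs _ _ _ _ g1 g2
      · exact A _ _ g2
      · exact A _ _ g1
    refine ⟨c1, ?_, ?_⟩
    · rw [← p2, mul_assoc, TRI]
      · exact PP i j hs _ _ _ _ g1 g3
      · exact A _ _ g3
      · exact A _ _ g1
    · rw [← c1, ← p3, mul_assoc, TRI]
      · exact PP i j hs _ _ _ _ g2 g4
      · exact A _ _ g4
      · exact A _ _ g2
  set W : Y → G := fun x => u (fl d x).1 (fl d x).2 * hol _ _ (S (P (fl d x).1 (fl d x).2) x) with hW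
  have corner' : ∀ (x : Y) m n, (m = (fl d x).1 ∨ m = (fl d x).1 + 1) → (n = (fl d x).2 ∨ n = (fl d x).2 + 1) →
      W x = u m n * hol _ _ (S (P m n) x) ∧ dist (P m n : ℂ) x < δ / 2 := by
    intro x m n hm hn
    obtain ⟨c1, c2, c3⟩ := corner x _ _ (mem_fl hd x)
    obtain ⟨g1, g2, g3, g4⟩ := gv_mem hd (fl d x).1 (fl d x).2
    refine ⟨?_, PA x _ _ (mem_fl hd x) m n ?_⟩ <;> rcases hm with rfl | rfl <;> rcases hn with rfl | rfl <;>
      first | assumption | rfl | exact c1.symm | exact c2.symm | exact c3.symm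
  have loc : ∀ (x y : Y) (p : Path x y), (∀ t, dist (p t : ℂ) x < d) → W x * hol x y p = W y := by
    intro x y p hp
    have hxy : dist (x : ℂ) y < d := by
      have := hp 1
      rwa [p.target, dist_comm] at this
    obtain ⟨n1, n2⟩ := fl_near hd hxy
    rw [abs_le] at n1 n2
    obtain ⟨w1, e1⟩ := corner' x (max (fl d x).1 (fl d y).1) (max (fl d x).2 (fl d y).2) (by omega) (by omega)
    obtain ⟨w2, e2⟩ := corner' y (max (fl d x).1 (fl d y).1) (max (fl d x).2 (fl d y).2) (by omega) (by omega)
    rw [w1, w2, mul_assoc, ← htr]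
    congr 1
    refine SML (P (max (fl d x).1 (fl d y).1) (max (fl d x).2 (fl d y).2)) _ _ _ _ (fun t => ?_)
      (fun t => (hS _ _ (e2.trans (by linarith)) t).trans (by linarith))
    rw [Path.trans_apply]
    split_ifs
    · exact (hS _ _ (e1.trans (by linarith)) _).trans (by linarith)
    · generalize (⟨2 * (t : ℝ) - 1, _⟩ : I) = s
      have h1 := hp s
      have h2 := dist_triangle_right (p s : ℂ) (P (max (fl d x).1 (fl d y).1) (max (fl d x).2 (fl d y).2)) x
      linarith
  clear_value W
  have tel : W (γ 0) * hol _ _ (γ.subpath 0 1) = W (γ 1) := by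
    refine IsPreconnected.induction₂ (isPreconnected_univ (α := I))
      (fun s t => W (γ s) * hol _ _ (γ.subpath s t) = W (γ t)) ?_ ?_ ?_ (mem_univ _) (mem_univ _)
    · intro s _
      have hc : Continuous fun t => (γ t : ℂ) := by fun_prop
      obtain ⟨r, hr, hr'⟩ := Metric.continuous_iff.1 hc s d hd
      rw [nhdsWithin_univ]
      filter_upwards [ball_mem_nhds s hr] with t ht
      apply loc
      intro t'
      have : γ.subpath s t t' ∈ range (γ.subpath s t) := ⟨t', rfl⟩
      rw [Path.range_subpath] at this
      obtain ⟨w, hw, hw'⟩ := this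
      rw [← hw']
      apply hr'
      have h3 : dist w s ≤ dist t s := by
        have := abs_sub_left_of_mem_uIcc (a := (s : ℝ)) (b := t) (c := w) (by
          rcases le_total s t with h | h
          · rw [uIcc_of_le h] at hw; rw [uIcc_of_le (by exact_mod_cast h)]; exact hw
          · rw [uIcc_of_ge h] at hw; rw [uIcc_of_ge (by exact_mod_cast h)]; exact hw)
        rw [Subtype.dist_eq, Subtype.dist_eq, Real.dist_eq, Real.dist_eq]
        exact this
      exact h3.trans_lt ht
    · intro s t w _ _ _ h1 h2
      rw [← h2, ← h1, mul_assoc, ← htr]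
      exact congrArg (W (γ s) * ·) <| hho _ _ _ _ ⟨(Path.Homotopy.subpathTransSubpath γ s t w).symm⟩
    · intro s t _ _ h
      rw [← h, ← Path.symm_subpath, hsymm, inv_mul_cancel_right]
  rw [Path.subpath_zero_one] at tel
  have hcast : ∀ (x y : Y) (hx : x = a) (hy : y = a), W x * hol x y (γ.cast hx hy) = W y → hol a a γ = 1 := by
    intro x y hx hy
    subst hx
    subst hy
    intro h
    exact mul_eq_left.1 h
  exact hcast _ _ _ _ tel

end
end Tri

namespace Tri
section
open Metric Set unitInterval

/-- homotopies built from pieces inside `Y` and small disks bounded by loops in `Y` -/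
inductive Sub (Y : Set ℂ) (ε : ℝ) : ∀ {x y : ℂ} {p q : Path x y}, p.Homotopy q → Prop
  | inY {x y : ℂ} {p q : Path x y} (F : p.Homotopy q) (h : ∀ z, F z ∈ Y) : Sub Y ε F
  | small {x : ℂ} {p : Path x x} (F : p.Homotopy (Path.refl x)) (hp : ∀ t, p t ∈ Y)
      (h : ∀ z, F z ∈ closedBall x ε) : Sub Y ε F
  | trans {x y : ℂ} {p q r : Path x y} {F : p.Homotopy q} {G : q.Homotopy r} (hF : Sub Y ε F) (hG : Sub Y ε G) :
      Sub Y ε (F.trans G)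
  | hcomp {x y z : ℂ} {p q : Path x y} {p' q' : Path y z} {F : p.Homotopy q} {G : p'.Homotopy q'}
      (hF : Sub Y ε F) (hG : Sub Y ε G) : Sub Y ε (F.hcomp G)
  | symm {x y : ℂ} {p q : Path x y} {F : p.Homotopy q} (hF : Sub Y ε F) : Sub Y ε F.symm
  | symm₂ {x y : ℂ} {p q : Path x y} {F : p.Homotopy q} (hF : Sub Y ε F) : Sub Y ε F.symm₂

theorem Sub.mono {Y Z : Set ℂ} {ε : ℝ} (hYZ : Y ⊆ Z) {x y : ℂ} {p q : Path x y} {F : p.Homotopy q}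
    (h : Sub Y ε F) : Sub Z ε F := by
  induction h with
  | inY F h => exact .inY F fun z => hYZ (h z)
  | small F hp h => exact .small F (fun t => hYZ (hp t)) h
  | trans hF hG ih1 ih2 => exact .trans ih1 ih2
  | hcomp hF hG ih1 ih2 => exact .hcomp ih1 ih2
  | symm hF ih => exact .symm ih
  | symm₂ hF ih => exact .symm₂ ih

theorem h_trans {x y : ℂ} {p q r p' q' r' : Path x y} {F : p.Homotopy q} {G : q.Homotopy r}
    {F' : p'.Homotopy q'} {G' : q'.Homotopy r'} {P : ℂ → ℂ → Prop}
    (h1 : ∀ z, P (F z) (F' z)) (h2 : ∀ z, P (G z) (G' z)) (z) : P (F.trans G z) (F'.trans G' z) := by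
  rw [Path.Homotopy.trans_apply, Path.Homotopy.trans_apply]
  split_ifs
  · exact h1 _
  · exact h2 _

theorem h_hcomp {x y w : ℂ} {p q p' q' : Path x y} {r s r' s' : Path y w} {F : p.Homotopy q} {G : r.Homotopy s}
    {F' : p'.Homotopy q'} {G' : r'.Homotopy s'} {P : ℂ → ℂ → Prop}
    (h1 : ∀ z, P (F z) (F' z)) (h2 : ∀ z, P (G z) (G' z)) (z) : P (F.hcomp G z) (F'.hcomp G' z) := by
  rw [Path.Homotopy.hcomp_apply, Path.Homotopy.hcomp_apply]
  split_ifs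
  · exact h1 (_, _)
  · exact h2 (_, _)

theorem h_symm {x y : ℂ} {p q p' q' : Path x y} {F : p.Homotopy q}
    {F' : p'.Homotopy q'} {P : ℂ → ℂ → Prop}
    (h1 : ∀ z, P (F z) (F' z)) (z) : P (F.symm z) (F'.symm z) := h1 (σ z.1, z.2)

theorem h_symm₂ {x y : ℂ} {p q p' q' : Path x y} {F : p.Homotopy q}
    {F' : p'.Homotopy q'} {P : ℂ → ℂ → Prop}
    (h1 : ∀ z, P (F z) (F' z)) (z) : P (F.symm₂ z) (F'.symm₂ z) := h1 (z.1, σ z.2)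

theorem Sub.near {Y : Set ℂ} {ε : ℝ} (hε : 0 ≤ ε) {x y : ℂ} {p q : Path x y} {F : p.Homotopy q}
    (h : Sub Y ε F) : ∀ z, ∃ w ∈ Y, dist (F z) w ≤ ε := by
  induction h with
  | inY F h => exact fun z => ⟨F z, h z, by simpa using hε⟩
  | @small x p F hp h => exact fun z => ⟨x, by simpa using hp 0, h z⟩
  | @trans x y p q r F G hF hG ih1 ih2 =>
    exact h_trans (F' := F) (G' := G) (P := fun z _ => ∃ w ∈ Y, dist z w ≤ ε) ih1 ih2
  | @hcomp _ _ _ _ _ _ _ F G hF hG ih1 ih2 =>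
    exact h_hcomp (F' := F) (G' := G) (P := fun z _ => ∃ w ∈ Y, dist z w ≤ ε) ih1 ih2
  | @symm _ _ _ _ F hF ih => exact h_symm (F' := F) (P := fun z _ => ∃ w ∈ Y, dist z w ≤ ε) ih
  | @symm₂ _ _ _ _ F hF ih => exact h_symm₂ (F' := F) (P := fun z _ => ∃ w ∈ Y, dist z w ≤ ε) ih

/-- the relation on paths in `Y` -/
def Rel (Y : Set ℂ) (ε : ℝ) {a b : Y} (p q : Path a b) : Prop :=
  ∃ F : (p.map continuous_subtype_val).Homotopy (q.map continuous_subtype_val), Sub Y ε F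

namespace Rel
variable {Y : Set ℂ} {ε : ℝ} {a b c : Y}

theorem of_hom {p q : Path a b} (h : p.Homotopic q) : Rel Y ε p q := by
  obtain ⟨F⟩ := h
  exact ⟨F.map ⟨Subtype.val, continuous_subtype_val⟩, .inY _ fun z => (F z).2⟩

theorem trans {p q r : Path a b} (h : Rel Y ε p q) (h' : Rel Y ε q r) : Rel Y ε p r := by
  obtain ⟨F, hF⟩ := h
  obtain ⟨G, hG⟩ := h'
  exact ⟨F.trans G, .trans hF hG⟩

theorem symm {p q : Path a b} (h : Rel Y ε p q) : Rel Y ε q p := by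
  obtain ⟨F, hF⟩ := h
  exact ⟨F.symm, .symm hF⟩

theorem symm₂ {p q : Path a b} (h : Rel Y ε p q) : Rel Y ε p.symm q.symm := by
  obtain ⟨F, hF⟩ := h
  exact ⟨F.symm₂, .symm₂ hF⟩

theorem hcomp {p q : Path a b} {p' q' : Path b c} (h : Rel Y ε p q) (h' : Rel Y ε p' q') :
    Rel Y ε (p.trans p') (q.trans q') := by
  obtain ⟨F, hF⟩ := h
  obtain ⟨G, hG⟩ := h'
  unfold Rel
  rw [Path.map_trans, Path.map_trans]
  exact ⟨F.hcomp G, .hcomp hF hG⟩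

theorem refl (p : Path a b) : Rel Y ε p p := of_hom (.refl p)

theorem small (hε : 0 < ε) (p : Path a a) (h : ∀ t, dist (p t : ℂ) a ≤ ε) : Rel Y ε p (Path.refl a) := by
  let F : (p.map continuous_subtype_val).Homotopy ((Path.refl a).map continuous_subtype_val) :=
    { toFun := fun z => ((1 - (z.1 : ℝ) : ℝ) : ℂ) * (p z.2 : ℂ) + ((z.1 : ℝ) : ℂ) * (a : ℂ)
      continuous_toFun := by fun_prop
      map_zero_left := by intro t; simp
      map_one_left := by intro t; simp
      prop' := by
        rintro t x (rfl | rfl)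
        · simp; ring
        · simp; ring }
  refine ⟨F, ?_⟩
  refine Sub.small (x := (a : ℂ)) (p := p.map continuous_subtype_val) F (fun t => (p t).2) fun z => ?_
  have := (convex_closedBall (a : ℂ) ε) (x := p z.2) (h z.2) (y := a) (by simp [hε.le])
    (a := 1 - z.1) (b := z.1) (by linarith [z.1.2.2]) z.1.2.1 (by ring)
  have e : F z = ((1 - (z.1 : ℝ) : ℝ) : ℂ) * (p z.2 : ℂ) + ((z.1 : ℝ) : ℂ) * (a : ℂ) := rfl
  refine mem_of_eq_of_mem e ?_
  simpa using this

end Rel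

/-- setoid of loops -/
def lset (Y : Set ℂ) (ε : ℝ) (a : Y) : Setoid (Path a a) where
  r := Rel Y ε
  iseqv := ⟨Rel.refl, Rel.symm, Rel.trans⟩

/-- quotient group of loops -/
def LG (Y : Set ℂ) (ε : ℝ) (a : Y) : Type := Quotient (lset Y ε a)

/-- class of a loop -/
def LG.mk {Y : Set ℂ} {ε : ℝ} {a : Y} (p : Path a a) : LG Y ε a := Quotient.mk (lset Y ε a) p

theorem LG.mk_eq {Y : Set ℂ} {ε : ℝ} {a : Y} {p q : Path a a} :
    (LG.mk p : LG Y ε a) = LG.mk q ↔ Rel Y ε p q := Quotient.eq (r := lset Y ε a)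

noncomputable instance (Y : Set ℂ) (ε : ℝ) (a : Y) : Mul (LG Y ε a) :=
  ⟨Quotient.map₂ Path.trans fun _ _ h _ _ h' => Rel.hcomp h h'⟩
noncomputable instance (Y : Set ℂ) (ε : ℝ) (a : Y) : One (LG Y ε a) := ⟨LG.mk (Path.refl a)⟩
noncomputable instance (Y : Set ℂ) (ε : ℝ) (a : Y) : Inv (LG Y ε a) :=
  ⟨Quotient.map Path.symm fun _ _ h => Rel.symm₂ h⟩
noncomputable instance (Y : Set ℂ) (ε : ℝ) (a : Y) : Group (LG Y ε a) :=
  Group.ofLeftAxioms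
    (by
      rintro ⟨p⟩ ⟨q⟩ ⟨r⟩
      exact LG.mk_eq.2 (Rel.of_hom ⟨Path.Homotopy.transAssoc p q r⟩))
    (by
      rintro ⟨p⟩
      exact LG.mk_eq.2 (Rel.of_hom ⟨Path.Homotopy.reflTrans p⟩))
    (by
      rintro ⟨p⟩
      exact LG.mk_eq.2 (Rel.of_hom ⟨(Path.Homotopy.reflSymmTrans p).symm⟩))

theorem LG.mk_mul {Y : Set ℂ} {ε : ℝ} {a : Y} (p q : Path a a) :
    (LG.mk (p.trans q) : LG Y ε a) = LG.mk p * LG.mk q := rfl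

theorem LG.mk_one {Y : Set ℂ} {ε : ℝ} {a : Y} :
    (1 : LG Y ε a) = LG.mk (Path.refl a) := rfl

open Path.Homotopic.Quotient in
theorem fill_step {Y : Set ℂ} (hY : IsCompact Y) (hn : Nonsep Y) (hu : PULC Y) (hpc : IsPathConnected Y)
    {ε : ℝ} (hε : 0 < ε) (a : Y) (γ : Path a a) : Rel Y ε γ (Path.refl a) := by
  have hc : ∀ b : Y, Nonempty (Path a b) := by
    have := isPathConnected_iff_pathConnectedSpace.1 hpc
    exact fun b => ⟨PathConnectedSpace.somePath a b⟩
  have c : ∀ b : Y, Path a b := fun b => (hc b).some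
  have key := holonomy hY hn hu hpc (LG Y ε a)
    (fun x y p => LG.mk (((c x).trans p).trans (c y).symm)) ?_ ?_ hε ?_ a γ
  · rw [LG.mk_one, LG.mk_eq] at key
    have h1 : Rel Y ε γ (((c a).symm.trans (((c a).trans γ).trans (c a).symm)).trans (c a)) := by
      apply Rel.of_hom
      rw [← Path.Homotopic.Quotient.eq]
      simp only [mk_trans, mk_symm, trans_assoc, symm_trans, trans_refl]
      rw [← trans_assoc, symm_trans, refl_trans]
    refine h1.trans ((((Rel.refl _).hcomp key).hcomp (Rel.refl _)).trans ?_)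
    apply Rel.of_hom
    rw [← Path.Homotopic.Quotient.eq]
    simp only [mk_trans, mk_symm, mk_refl, symm_trans, trans_refl]
  · intro x y z p q
    rw [← LG.mk_mul, LG.mk_eq]
    apply Rel.of_hom
    rw [← Path.Homotopic.Quotient.eq]
    simp only [mk_trans, mk_symm, trans_assoc]
    rw [← trans_assoc (mk (c y)).symm, symm_trans, refl_trans]
  · intro x y p q h
    rw [LG.mk_eq]
    exact ((Rel.refl _).hcomp (Rel.of_hom h)).hcomp (Rel.refl _)
  · intro x p hp
    rw [LG.mk_one, LG.mk_eq]
    refine (((Rel.refl _).hcomp (Rel.small hε p hp)).hcomp (Rel.refl _)).trans ?_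
    apply Rel.of_hom
    rw [← Path.Homotopic.Quotient.eq]
    simp only [mk_trans, mk_symm, mk_refl, trans_symm, trans_refl]

end
end Tri

namespace Tri
section
open Metric Set unitInterval

theorem fill_loop {x : ℂ} (f : Path x x) {ε : ℝ} (hε : 0 < ε) :
    ∃ F : f.Homotopy (Path.refl x), Sub (hat (range f)) ε F := by
  have hK : IsCompact (range f) := isCompact_range f.continuous
  haveI : PathConnectedSpace I := isPathConnected_iff_pathConnectedSpace.1
    ((convex_Icc (0 : ℝ) 1).isPathConnected ⟨0, by simp⟩)
  have hpc : IsPathConnected (range f) := isPathConnected_range f.continuous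
  have hm : ∀ t, f t ∈ hat (range f) := fun t => subset_hat _ ⟨t, rfl⟩
  let γ : Path (⟨x, by simpa using hm 0⟩ : hat (range f)) ⟨x, by simpa using hm 0⟩ :=
    { toFun := fun t => ⟨f t, hm t⟩
      continuous_toFun := by fun_prop
      source' := by simp
      target' := by simp }
  obtain ⟨F, hF⟩ := fill_step (hat_compact hK) (hat_nonsep _) (hat_pulc hK.isClosed (range_pulc f))
    (hat_pathConnected hK.isClosed hpc) hε _ γ
  exact ⟨F, hF⟩

theorem Sub.refine {Y : Set ℂ} (hn : Nonsep Y) {ε ε' : ℝ} (hε' : 0 < ε') (h' : ε' ≤ ε)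
    {x y : ℂ} {p q : Path x y} {F : p.Homotopy q} (h : Sub Y ε F) :
    ∃ F' : p.Homotopy q, Sub Y ε' F' ∧ ∀ z, dist (F z) (F' z) ≤ 3 * ε := by
  induction h with
  | inY F h => exact ⟨F, .inY F h, fun z => by simp; linarith⟩
  | @small x p F hp h =>
    obtain ⟨F', hF'⟩ := fill_loop p hε'
    have hpY : range p ⊆ Y := by rintro _ ⟨t, rfl⟩; exact hp t
    have hpB : range p ⊆ closedBall x ε := by
      rintro _ ⟨t, rfl⟩
      have := h (0, t)
      rwa [F.apply_zero] at this
    refine ⟨F', hF'.mono (hat_subset hpY hn), fun z => ?_⟩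
    obtain ⟨w, hw, hd⟩ := hF'.near hε'.le z
    have h1 := hat_subset hpB (nonsep_closedBall x (hε'.le.trans h')) hw
    have h2 := h z
    rw [mem_closedBall] at h1 h2
    have h3 := dist_triangle4 (F z) x w (F' z)
    rw [dist_comm x w, dist_comm w (F' z)] at h3
    linarith
  | trans hF hG ih1 ih2 =>
    obtain ⟨F', a1, a2⟩ := ih1
    obtain ⟨G', b1, b2⟩ := ih2
    exact ⟨F'.trans G', .trans a1 b1, h_trans (P := fun u v => dist u v ≤ 3 * ε) a2 b2⟩
  | hcomp hF hG ih1 ih2 =>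
    obtain ⟨F', a1, a2⟩ := ih1
    obtain ⟨G', b1, b2⟩ := ih2
    exact ⟨F'.hcomp G', .hcomp a1 b1, h_hcomp (P := fun u v => dist u v ≤ 3 * ε) a2 b2⟩
  | symm hF ih =>
    obtain ⟨F', a1, a2⟩ := ih
    exact ⟨F'.symm, .symm a1, h_symm (P := fun u v => dist u v ≤ 3 * ε) a2⟩
  | symm₂ hF ih =>
    obtain ⟨F', a1, a2⟩ := ih
    exact ⟨F'.symm₂, .symm₂ a1, h_symm₂ (P := fun u v => dist u v ≤ 3 * ε) a2⟩

theorem fill {x : ℂ} (f : Path x x) : ∃ F : f.Homotopy (Path.refl x), ∀ z, F z ∈ hat (range f) := by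
  set Y := hat (range f) with hY
  have hYc : IsClosed Y := (hat_compact (isCompact_range f.continuous)).isClosed
  obtain ⟨P0, hP0⟩ := fill_loop f (ε := (1 / 2 : ℝ) ^ 0) (by positivity)
  let St (k : ℕ) := {F : f.Homotopy (Path.refl x) // Sub Y ((1 / 2 : ℝ) ^ k) F}
  have step : ∀ k (F : St k), ∃ F' : St (k + 1), ∀ z, dist (F.1 z) (F'.1 z) ≤ 3 * (1 / 2 : ℝ) ^ k := by
    rintro k ⟨F, hF⟩
    obtain ⟨F', h1, h2⟩ := hF.refine (hat_nonsep _) (ε' := (1 / 2 : ℝ) ^ (k + 1)) (by positivity)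
      (pow_le_pow_of_le_one (by norm_num) (by norm_num) (by omega))
    exact ⟨⟨F', h1⟩, h2⟩
  choose nxt hnxt using step
  let s : ∀ k, St k := fun k => Nat.rec ⟨P0, hP0⟩ (fun k p => nxt k p) k
  have hs : ∀ k, s (k + 1) = nxt k (s k) := fun k => rfl
  let φ : ℕ → C(I × I, ℂ) := fun k => (s k).1.toContinuousMap
  have hf : ∀ k, dist (φ k) (φ (k + 1)) ≤ 3 * (1 / 2 : ℝ) ^ k := by
    intro k
    rw [ContinuousMap.dist_le (by positivity)]
    intro t
    change dist ((s k).1 t) ((s (k + 1)).1 t) ≤ _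
    rw [hs]
    exact hnxt k (s k) t
  have hcau := cauchySeq_of_le_geometric (1 / 2 : ℝ) 3 (by norm_num) hf
  obtain ⟨g, hg⟩ := cauchySeq_tendsto_of_complete hcau
  have hgt : ∀ t, Filter.Tendsto (fun k => (s k).1 t) Filter.atTop (nhds (g t)) := fun t =>
    ((continuous_eval_const t).tendsto g).comp hg
  have uniq : ∀ t w, (∀ k, (s k).1 t = w) → g t = w := by
    intro t w h
    refine tendsto_nhds_unique (hgt t) ?_
    simp only [h]
    exact tendsto_const_nhds
  refine ⟨{ toContinuousMap := g
            map_zero_left := fun t => uniq _ _ fun k => (s k).1.apply_zero t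
            map_one_left := fun t => uniq _ _ fun k => (s k).1.apply_one t
            prop' := ?_ }, fun t => ?_⟩
  · rintro t w (rfl | rfl)
    · exact uniq _ _ fun k => ((s k).1.source t).trans f.source.symm
    · exact uniq _ _ fun k => ((s k).1.target t).trans f.target.symm
  change g t ∈ Y
  have : g t ∈ closure Y := by
    rw [Metric.mem_closure_iff]
    intro ε hε
    have e1 := (Metric.tendsto_nhds.1 (hgt t)) (ε / 2) (by positivity)
    have e2 : ∀ᶠ k : ℕ in Filter.atTop, (1 / 2 : ℝ) ^ k < ε / 2 :=
      (tendsto_pow_atTop_nhds_zero_of_lt_one (by norm_num) (by norm_num)).eventually_lt_const (by positivity)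
    obtain ⟨k, h1, h2⟩ := (e1.and e2).exists
    obtain ⟨e, he, hd⟩ := (s k).2.near (by positivity) t
    refine ⟨e, he, ?_⟩
    linarith [dist_triangle_left (g t) e ((s k).1 t)]
  rwa [hYc.closure_eq] at this

theorem main {S0 S1 S2 : Set ℂ} (h0 : IsSimplyConnected S0) (h1 : IsSimplyConnected S1)
    (h2 : IsSimplyConnected S2) (h01 : IsPathConnected (S0 ∩ S1)) (h02 : IsPathConnected (S0 ∩ S2))
    (h12 : IsPathConnected (S1 ∩ S2)) (hne : (S0 ∩ S1 ∩ S2).Nonempty) : IsSimplyConnected (S0 ∩ S1 ∩ S2) := by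
  rw [isSimplyConnected_iff_exists_homotopy_refl_forall_mem]
  constructor
  · rw [isPathConnected_iff]
    refine ⟨hne, fun x hx y hy => joined_triple h0 h1 h2 ?_ ?_ ?_⟩
    · exact h01.joinedIn x hx.1 y hy.1
    · exact h02.joinedIn x ⟨hx.1.1, hx.2⟩ y ⟨hy.1.1, hy.2⟩
    · exact h12.joinedIn x ⟨hx.1.2, hx.2⟩ y ⟨hy.1.2, hy.2⟩
  · intro x p hp
    obtain ⟨F, hF⟩ := fill p
    refine ⟨F, fun z => ⟨⟨borsuk' h0 p (fun t => (hp t).1.1) (hF z), borsuk' h1 p (fun t => (hp t).1.2) (hF z)⟩,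
      borsuk' h2 p (fun t => (hp t).2) (hF z)⟩⟩

end
end Tri


/-- **Intersection of three simply connected compacta in the plane.**
If `S₀, S₁, S₂` are simply connected compact subsets of the plane `ℝ²` such that
the intersection of any two of them is path connected and `S₀ ∩ S₁ ∩ S₂ ≠ ∅`,
then `S₀ ∩ S₁ ∩ S₂` is simply connected. -/
theorem intersection_three_simply_connected
    (S₀ S₁ S₂ : Set (EuclideanSpace ℝ (Fin 2)))
    (hc₀ : IsCompact S₀) (hc₁ : IsCompact S₁) (hc₂ : IsCompact S₂)
    (hs₀ : SimplyConnectedSpace S₀) (hs₁ : SimplyConnectedSpace S₁)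
    (hs₂ : SimplyConnectedSpace S₂)
    (h01 : IsPathConnected (S₀ ∩ S₁)) (h02 : IsPathConnected (S₀ ∩ S₂))
    (h12 : IsPathConnected (S₁ ∩ S₂))
    (hne : (S₀ ∩ S₁ ∩ S₂).Nonempty) :
    SimplyConnectedSpace ↥(S₀ ∩ S₁ ∩ S₂) := by
  let e : EuclideanSpace ℝ (Fin 2) ≃ₜ ℂ := Complex.orthonormalBasisOneI.repr.symm.toHomeomorph
  change IsSimplyConnected (S₀ ∩ S₁ ∩ S₂)
  rw [← e.isSimplyConnected_image]
  have hi : ∀ A B : Set (EuclideanSpace ℝ (Fin 2)), e '' (A ∩ B) = e '' A ∩ e '' B := fun A B =>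
    Set.image_inter e.injective
  rw [hi, hi]
  refine Tri.main (e.isSimplyConnected_image.2 hs₀) (e.isSimplyConnected_image.2 hs₁)
    (e.isSimplyConnected_image.2 hs₂) ?_ ?_ ?_ ?_
  · rw [← hi]; exact h01.image e.continuous
  · rw [← hi]; exact h02.image e.continuous
  · rw [← hi]; exact h12.image e.continuous
  · rw [← hi, ← hi]; exact hne.image e
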